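/- arXiv:0901.2061 — 4 statements merged into one kernel-verified Lean document; each statement's English description precedes it below -/
import Mathlib

section
/- Let r ≥ 2 and let 𝓗 = {H_1, …, H_ℓ} be a finite family of nontrivial balanced r-graphs, where H_i has v_i vertices, e_i edges and ρ_i = ρ(H_i) = (e_i − 1)/(v_i − r), with ρ_1 ≤ ρ_2 ≤ … ≤ ρ_ℓ. Let s be defined by ρ := ρ_1 = ρ_2 = … = ρ_s < ρ_{s+1}, and assume ρ > 1/(r−1). For each i and each edge e of H_i let α_i(e) be the number of automorphisms of H_i mapping e to itself, and set α_i = min_e α_i(e). Let c_1 > 0 be the solution of Σ_{i=1}^{s} e_i x^{e_i−1}/α_i = 1/(50·r!), let c_2 = max{ (α_i/(5 e_i c_1^{e_i−1} r!))^{1/(r−1)} : 1 ≤ i ≤ s }, and let c_𝓗 = 2 (r!/c_1)^{1/(r−1−1/ρ)} · c_2^{(r−1)(r−1/ρ)/(r−1−1/ρ)} · ((r−1)/(r−1−1/ρ))^{(r−1/ρ)/(r−1−1/ρ)}. Then for all sufficiently large k there exists an 𝓗-free r-graph with chromatic number greater than k and fewer than c_𝓗 · (k^{r−1} log k)^{(r−1/ρ)/(r−1−1/ρ)}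 edges; that is, m_k(𝓗) < c_𝓗 (k^{r−1} log k)^{(r−1/ρ)/(r−1−1/ρ)}. -/
/-- `E` is the edge set of an `r`-uniform hypergraph: every edge has exactly `r` vertices. -/
def IsRGraph (r : ℕ) {V : Type*} (E : Finset (Finset V)) : Prop :=
  ∀ e ∈ E, e.card = r

/-- `f` is a proper coloring of the hypergraph with edge set `E`:
no edge with at least two vertices is monochromatic. -/
def IsProperColoring {V : Type*} (E : Finset (Finset V)) {k : ℕ} (f : V → Fin k) : Prop :=
  ∀ e ∈ E, 2 ≤ e.card → ∃ u ∈ e, ∃ v ∈ e, f u ≠ f v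

/-- The hypergraph with edge set `E` is properly `k`-colorable,
i.e. its chromatic number is at most `k`. -/
def HypColorable {V : Type*} (E : Finset (Finset V)) (k : ℕ) : Prop :=
  ∃ f : V → Fin k, IsProperColoring E f

/-- `EG` contains a (not necessarily induced) copy of the hypergraph `EH`. -/
def HasCopy {W V : Type*} [DecidableEq V]
    (EH : Finset (Finset W)) (EG : Finset (Finset V)) : Prop :=
  ∃ g : W → V, Function.Injective g ∧ ∀ e ∈ EH, e.image g ∈ EG

/-- The number of automorphisms of the hypergraph `H` (on vertex set `Fin m`) that map the
edge `ed` to itself. -/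
noncomputable def autFixCount {m : ℕ} (H : Finset (Finset (Fin m))) (ed : Finset (Fin m)) : ℕ :=
  Nat.card {σ : Equiv.Perm (Fin m) // (∀ f ∈ H, f.image σ ∈ H) ∧ ed.image σ = ed}

section Auxiliary

open Finset

/-- The probability that a random subset of `E`, containing each element independently with
probability `p`, equals `G`. -/
noncomputable def bernoulliWeight {β : Type*} [DecidableEq β] (p : ℝ) (E G : Finset β) : ℝ :=
  p ^ #G * (1 - p) ^ #(E \ G)

section Bernoulli

variable {β : Type*} [DecidableEq β] {p : ℝ} {E : Finset β}

lemma bernoulliWeight_nonneg (hp0 : 0 ≤ p) (hp1 : p ≤ 1) (E G : Finset β) :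
    0 ≤ bernoulliWeight p E G :=
  mul_nonneg (pow_nonneg hp0 _) (pow_nonneg (sub_nonneg.2 hp1) _)

lemma sum_bernoulliWeight_mul_prod (p : ℝ) (E : Finset β) (x y : β → ℝ) :
    ∑ G ∈ E.powerset, bernoulliWeight p E G * ((∏ i ∈ G, x i) * ∏ i ∈ E \ G, y i) =
      ∏ i ∈ E, (p * x i + (1 - p) * y i) := by
  rw [prod_add]
  refine sum_congr rfl fun G _ => ?_
  simp only [bernoulliWeight, prod_mul_distrib, prod_const]
  ring

lemma sum_bernoulliWeight (p : ℝ) (E : Finset β) :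
    ∑ G ∈ E.powerset, bernoulliWeight p E G = 1 := by
  simpa using sum_bernoulliWeight_mul_prod p E 1 1

lemma sum_bernoulliWeight_superset (p : ℝ) {S : Finset β} (hS : S ⊆ E) :
    ∑ G ∈ E.powerset, bernoulliWeight p E G * (if S ⊆ G then 1 else 0) = p ^ #S := by
  have h := sum_bernoulliWeight_mul_prod p E 1 (fun i => if i ∈ S then 0 else 1)
  have h2 : ∏ i ∈ E, (p * (1 : β → ℝ) i + (1 - p) * (if i ∈ S then (0 : ℝ) else 1)) = p ^ #S := by
    rw [← prod_subset hS, ← prod_const]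
    · refine prod_congr rfl fun i hi => by simp [hi]
    · intro i _ hi
      simp [hi]
  rw [h2] at h
  rw [← h]
  refine sum_congr rfl fun G hG => ?_
  congr 1
  split_ifs with hSG
  · rw [prod_eq_one (s := E \ G)]
    · simp
    · intro i hi
      rw [if_neg fun hiS => (mem_sdiff.1 hi).2 (hSG hiS)]
  · obtain ⟨i, hiS, hiG⟩ := not_subset.1 hSG
    rw [prod_eq_zero (mem_sdiff.2 ⟨hS hiS, hiG⟩) (by simp [hiS]), mul_zero]

lemma sum_bernoulliWeight_card (p : ℝ) (E : Finset β) :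
    ∑ G ∈ E.powerset, bernoulliWeight p E G * #G = p * #E := by
  have h : ∀ G ∈ E.powerset, (bernoulliWeight p E G * #G : ℝ) =
      ∑ i ∈ E, bernoulliWeight p E G * (if {i} ⊆ G then 1 else 0) := by
    intro G hG
    rw [← mul_sum]
    simp only [singleton_subset_iff, sum_boole]
    rw [filter_mem_eq_inter, inter_eq_right.2 (mem_powerset.1 hG)]
  rw [sum_congr rfl h, sum_comm, sum_congr rfl fun i hi =>
    sum_bernoulliWeight_superset p (singleton_subset_iff.2 hi)]
  simp [mul_comm]

lemma sum_bernoulliWeight_exp_neg_card_inter (p : ℝ) {U : Finset β} (hU : U ⊆ E) :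
    ∑ G ∈ E.powerset, bernoulliWeight p E G * Real.exp (-(#(G ∩ U) : ℝ)) =
      (1 - p * (1 - Real.exp (-1))) ^ #U := by
  have h := sum_bernoulliWeight_mul_prod p E (fun i => if i ∈ U then Real.exp (-1) else 1) 1
  have h2 : ∏ i ∈ E, (p * (if i ∈ U then Real.exp (-1) else 1) + (1 - p) * (1 : β → ℝ) i) =
      (1 - p * (1 - Real.exp (-1))) ^ #U := by
    rw [← prod_subset hU, ← prod_const]
    · refine prod_congr rfl fun i hi => ?_
      simp only [hi, if_true, Pi.one_apply]
      ring
    · intro i _ hi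
      simp [hi]
  rw [h2] at h
  rw [← h]
  refine sum_congr rfl fun G hG => ?_
  simp only [Pi.one_apply, prod_const_one, mul_one]
  rw [← prod_filter, prod_const, filter_mem_eq_inter, ← Real.exp_nat_mul]
  ring_nf

/-- `A` consists of pairwise disjoint subsets of `G`. -/
def IsPackingIn (G : Finset β) (A : Finset (Finset β)) : Prop :=
  (A : Set (Finset β)).PairwiseDisjoint id ∧ ∀ S ∈ A, S ⊆ G

open Classical in
/-- The weighted count of the pairwise disjoint subfamilies of `B` whose members all lie
in `G`. -/
noncomputable def packingSum (B : Finset (Finset β)) (z : Finset β → ℝ) (G : Finset β) : ℝ :=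
  ∑ A ∈ B.powerset with IsPackingIn G A, ∏ S ∈ A, z S

lemma sum_bernoulliWeight_packingSum_le (hp0 : 0 ≤ p) {B : Finset (Finset β)}
    (hB : ∀ S ∈ B, S ⊆ E) {z : Finset β → ℝ} (hz : ∀ S, 0 ≤ z S) :
    ∑ G ∈ E.powerset, bernoulliWeight p E G * packingSum B z G ≤
      ∏ S ∈ B, (1 + z S * p ^ #S) := by
  classical
  rw [prod_one_add]
  have h : ∀ G, bernoulliWeight p E G * packingSum B z G =
      ∑ A ∈ B.powerset, if (A : Set (Finset β)).PairwiseDisjoint id then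
        (∏ S ∈ A, z S) * (bernoulliWeight p E G * (if A.sup id ⊆ G then 1 else 0)) else 0 := by
    intro G
    rw [packingSum, sum_filter, mul_sum]
    refine sum_congr rfl fun A _ => ?_
    have : A.sup id ⊆ G ↔ ∀ S ∈ A, S ⊆ G := by
      exact Finset.sup_le_iff
    simp only [this]
    by_cases h1 : (A : Set (Finset β)).PairwiseDisjoint id <;> by_cases h2 : ∀ S ∈ A, S ⊆ G <;>
      simp [IsPackingIn, h1, h2, mul_comm]
  rw [sum_congr rfl fun G _ => h G, sum_comm]
  refine sum_le_sum fun A hA => ?_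
  have hA' := mem_powerset.1 hA
  split_ifs with hd
  · have hAE : A.sup id ⊆ E := Finset.sup_le fun S hS => hB S (hA' hS)
    rw [← mul_sum, sum_bernoulliWeight_superset p hAE, prod_mul_distrib,
      prod_pow_eq_pow_sum]
    have : #(A.sup id) = ∑ S ∈ A, #S := by
      rw [sup_eq_biUnion, card_biUnion (fun x hx y hy hxy => hd hx hy hxy)]; rfl
    rw [this]
  · simp only [sum_const_zero]
    exact prod_nonneg fun S _ => mul_nonneg (hz S) (pow_nonneg hp0 _)

/-- The deletion method: if the expected failures sum up to less than one, some subset of `E`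
with fewer than `M` elements contains no member of `B` and meets every member of `Us`. -/
theorem exists_subset_avoiding_meeting (hp0 : 0 ≤ p) (hp1 : p ≤ 1) {B Us : Finset (Finset β)}
    (hB : ∀ S ∈ B, S ⊆ E) (hBne : ∀ S ∈ B, S.Nonempty) (hUs : ∀ U ∈ Us, U ⊆ E)
    {a M : ℝ} (hM : 0 < M)
    (hsum : ∑ U ∈ Us, (Real.exp a * (1 - p * (1 - Real.exp (-1))) ^ #U +
      Real.exp (-a) * ∏ S ∈ B, (1 + (Real.exp #(S ∩ U) - 1) * p ^ #S)) + p * #E / M < 1) :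
    ∃ G ⊆ E, (#G : ℝ) < M ∧ (∀ S ∈ B, ¬ S ⊆ G) ∧ ∀ U ∈ Us, (G ∩ U).Nonempty := by
  classical
  set z : Finset β → Finset β → ℝ := fun U S => Real.exp #(S ∩ U) - 1 with hz_def
  have hz : ∀ U S, 0 ≤ z U S := fun U S => by
    simp only [hz_def, sub_nonneg]
    exact Real.one_le_exp (Nat.cast_nonneg _)
  set Φ : Finset β → ℝ := fun G =>
    ∑ U ∈ Us, (Real.exp a * Real.exp (-(#(G ∩ U) : ℝ)) + Real.exp (-a) * packingSum B (z U) G) +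
      #G / M with hΦ
  have hpack : ∀ U G, 0 ≤ packingSum B (z U) G := fun U G =>
    sum_nonneg fun A _ => prod_nonneg fun S _ => hz U S
  have hE : ∑ G ∈ E.powerset, bernoulliWeight p E G * Φ G < 1 := by
    refine lt_of_le_of_lt ?_ hsum
    have : ∀ G, bernoulliWeight p E G * Φ G =
        ∑ U ∈ Us, (Real.exp a * (bernoulliWeight p E G * Real.exp (-(#(G ∩ U) : ℝ))) +
          Real.exp (-a) * (bernoulliWeight p E G * packingSum B (z U) G)) +
          bernoulliWeight p E G * #G / M := by
      intro G
      simp only [hΦ]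
      rw [mul_add, mul_sum, mul_div_assoc]
      congr 1
      exact sum_congr rfl fun U _ => by ring
    rw [sum_congr rfl fun G _ => this G, sum_add_distrib, sum_comm, ← sum_div,
      sum_bernoulliWeight_card]
    gcongr with U hU
    rw [sum_add_distrib, ← mul_sum, ← mul_sum,
      sum_bernoulliWeight_exp_neg_card_inter p (hUs U hU)]
    gcongr
    exact sum_bernoulliWeight_packingSum_le hp0 hB (hz U)
  obtain ⟨G, hGE, hG⟩ : ∃ G ∈ E.powerset, Φ G < 1 := by
    by_contra! h
    refine hE.not_ge ?_
    rw [← sum_bernoulliWeight p E]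
    exact sum_le_sum fun G hG =>
      le_mul_of_one_le_right (bernoulliWeight_nonneg hp0 hp1 E G) (h G hG)
  have hterm : ∀ U, 0 ≤ Real.exp a * Real.exp (-(#(G ∩ U) : ℝ)) +
      Real.exp (-a) * packingSum B (z U) G := fun U => by
    have := hpack U G
    positivity
  have hcard : (#G : ℝ) < M := by
    have h0 := sum_nonneg fun U (_ : U ∈ Us) => hterm U
    rw [← div_lt_one hM]
    simp only [hΦ] at hG
    linarith
  have hU : ∀ U ∈ Us, a < #(G ∩ U) ∧ packingSum B (z U) G < Real.exp a := by
    intro U hU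
    have h1 := single_le_sum (fun U _ => hterm U) hU
    have h2 : 0 ≤ (#G : ℝ) / M := by positivity
    have h3 : Real.exp a * Real.exp (-(#(G ∩ U) : ℝ)) +
      Real.exp (-a) * packingSum B (z U) G < 1 := by
      simp only [hΦ] at hG
      linarith
    have h4 : 0 ≤ Real.exp (-a) * packingSum B (z U) G :=
      mul_nonneg (Real.exp_pos _).le (hpack U G)
    have h5 : 0 < Real.exp a * Real.exp (-(#(G ∩ U) : ℝ)) := by positivity
    constructor
    · have : Real.exp a * Real.exp (-(#(G ∩ U) : ℝ)) < 1 := by linarith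
      rw [← Real.exp_add, Real.exp_lt_one_iff] at this
      linarith
    · have : Real.exp (-a) * packingSum B (z U) G < 1 := by linarith
      rwa [Real.exp_neg, inv_mul_lt_one₀ (Real.exp_pos _)] at this
  obtain ⟨D, hD, hDmax⟩ := exists_max_image
    (B.powerset.filter (IsPackingIn G)) card
    ⟨∅, by simp [IsPackingIn]⟩
  simp only [mem_filter, mem_powerset] at hD hDmax
  obtain ⟨hDB, hDdisj, hDG⟩ := hD
  refine ⟨G \ D.sup id, sdiff_subset.trans (mem_powerset.1 hGE),
    lt_of_le_of_lt (by exact_mod_cast card_le_card sdiff_subset) hcard, ?_, ?_⟩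
  · intro S hS hSG
    have hdisj : ∀ S' ∈ D, Disjoint S S' := fun S' hS' =>
      (disjoint_of_subset_left hSG sdiff_disjoint).mono_right
        (le_sup (f := id) hS')
    have hSD : S ∉ D := fun h => (hBne S hS).ne_empty (disjoint_self.1 (hdisj S h))
    have := hDmax (insert S D) ⟨insert_subset hS hDB, by
      rw [coe_insert]
      exact hDdisj.insert fun S' hS' _ => hdisj S' hS', by
      intro S' hS'
      rcases mem_insert.1 hS' with rfl | h
      · exact hSG.trans sdiff_subset
      · exact hDG S' h⟩
    rw [card_insert_of_notMem hSD] at this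
    omega
  · intro U hUU
    obtain ⟨h1, h2⟩ := hU U hUU
    have hlost : Real.exp (#(D.sup id ∩ U) : ℝ) ≤ packingSum B (z U) G := by
      have hc : #(D.sup id ∩ U) = ∑ S ∈ D, #(S ∩ U) := by
        rw [sup_eq_biUnion, biUnion_inter, card_biUnion]
        · rfl
        · exact fun x hx y hy hxy => (hDdisj hx hy hxy).mono inter_subset_left inter_subset_left
      rw [hc, Nat.cast_sum, Real.exp_sum]
      have : ∀ S ∈ D, Real.exp (#(S ∩ U) : ℝ) = 1 + z U S := fun S _ => by simp [hz_def]
      rw [prod_congr rfl this, prod_one_add, packingSum]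
      refine sum_le_sum_of_subset_of_nonneg ?_ fun A _ _ => prod_nonneg fun S _ => hz U S
      intro A hA
      have hA := mem_powerset.1 hA
      exact mem_filter.2 ⟨mem_powerset.2 (hA.trans hDB), hDdisj.subset (by exact_mod_cast hA),
        fun S hS => hDG S (hA hS)⟩
    have h3 : (#(D.sup id ∩ U) : ℝ) < a := Real.exp_lt_exp.1 (hlost.trans_lt h2)
    have h4 : #(D.sup id ∩ U) < #(G ∩ U) := by exact_mod_cast h3.trans h1
    by_contra hne
    rw [not_nonempty_iff_eq_empty] at hne
    refine h4.not_ge (card_le_card fun x hx => ?_)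
    have hx' := mem_inter.1 hx
    refine mem_inter.2 ⟨?_, hx'.2⟩
    by_contra hxD
    have : x ∈ (G \ D.sup id) ∩ U := mem_inter.2 ⟨mem_sdiff.2 ⟨hx'.1, hxD⟩, hx'.2⟩
    simp [hne] at this

end Bernoulli

section Copies

variable {m : ℕ}

/-- The injective maps from `Fin m` to `Fin n`. -/
def injections (m n : ℕ) : Finset (Fin m → Fin n) :=
  univ.filter Function.Injective

/-- The edge sets of all copies of the hypergraph `H` inside the complete hypergraph on
`Fin n`. -/
def copies (H : Finset (Finset (Fin m))) (n : ℕ) : Finset (Finset (Finset (Fin n))) :=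
  (injections m n).image fun g => H.image fun f => f.image g

lemma card_of_mem_copies {H : Finset (Finset (Fin m))} {n : ℕ} {S : Finset (Finset (Fin n))}
    (hS : S ∈ copies H n) : #S = #H := by
  obtain ⟨g, hg, rfl⟩ := mem_image.1 hS
  exact card_image_of_injective _ (image_injective (mem_filter.1 hg).2)

lemma subset_powersetCard_of_mem_copies {r : ℕ} {H : Finset (Finset (Fin m))}
    (hH : IsRGraph r H) {n : ℕ} {S : Finset (Finset (Fin n))} (hS : S ∈ copies H n) :
    S ⊆ powersetCard r univ := by
  obtain ⟨g, hg, rfl⟩ := mem_image.1 hS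
  intro x hx
  obtain ⟨f, hf, rfl⟩ := mem_image.1 hx
  exact mem_powersetCard.2 ⟨subset_univ _,
    (card_image_of_injective _ (mem_filter.1 hg).2).trans (hH f hf)⟩

lemma card_injections_image_eq_le {n r : ℕ} {h : Finset (Fin m)} {f : Finset (Fin n)}
    (hh : #h = r) (hf : #f = r) :
    #((injections m n).filter fun g => h.image g = f) ≤ r.factorial * n ^ (m - r) := by
  have hcard : Fintype.card ((h ↪ f) × (↥(hᶜ : Finset (Fin m)) → Fin n)) =
      r.factorial * n ^ (m - r) := by
    simp [Fintype.card_embedding_eq, hh, hf, Nat.descFactorial_self]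
  rw [← hcard, ← card_univ]
  have hmem : ∀ g : {g // g ∈ (injections m n).filter fun g => h.image g = f},
      Function.Injective g.1 ∧ h.image g.1 = f := fun g =>
    ⟨(mem_filter.1 (mem_filter.1 g.2).1).2, (mem_filter.1 g.2).2⟩
  rw [← card_attach]
  refine card_le_card_of_injOn (fun g => (⟨fun x => ⟨g.1 x,
      (hmem g).2.subset (mem_image_of_mem _ x.2)⟩, fun x y hxy =>
      Subtype.ext ((hmem g).1 (congrArg Subtype.val hxy))⟩, fun x => g.1 x))
    (fun _ _ => mem_coe.2 (mem_univ _)) ?_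
  intro g₁ _ g₂ _ hg
  ext1
  funext x
  simp only [Prod.mk.injEq] at hg
  by_cases hx : x ∈ h
  · exact congrArg Subtype.val (DFunLike.congr_fun hg.1 ⟨x, hx⟩)
  · exact congrFun hg.2 ⟨x, mem_compl.2 hx⟩

lemma card_maps_into (n : ℕ) (A : Finset (Fin m)) (T : Finset (Fin n)) :
    #((univ : Finset (Fin m → Fin n)).filter fun g => ∀ x ∈ A, g x ∈ T) =
      #T ^ #A * n ^ (m - #A) := by
  have : ((univ : Finset (Fin m → Fin n)).filter fun g => ∀ x ∈ A, g x ∈ T) =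
      Fintype.piFinset fun x => if x ∈ A then T else univ := by
    ext g
    simp only [mem_filter, mem_univ, true_and, Fintype.mem_piFinset]
    refine forall_congr' fun x => ?_
    split_ifs with hx <;> simp [hx]
  rw [this, Fintype.card_piFinset]
  rw [prod_congr rfl fun x _ => apply_ite card (x ∈ A) T univ, prod_ite, prod_const, prod_const,
    filter_mem_eq_inter, univ_inter, filter_notMem_eq_sdiff, ← compl_eq_univ_sdiff, card_compl]
  simp

/-- Double counting of the copies of `H` through a given edge. -/
lemma mul_card_copies_mem_le {r n a : ℕ} {H : Finset (Finset (Fin m))} (hH : IsRGraph r H)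
    (ha : ∀ h ∈ H, a ≤ autFixCount H h) {f : Finset (Fin n)} (hf : #f = r) :
    a * #((copies H n).filter fun S => f ∈ S) ≤ #H * (r.factorial * n ^ (m - r)) := by
  classical
  set I := (injections m n).filter fun g => ∃ h ∈ H, h.image g = f with hI
  have hIcard : #I ≤ #H * (r.factorial * n ^ (m - r)) := by
    have : I ⊆ H.biUnion fun h => (injections m n).filter fun g => h.image g = f := by
      intro g hg
      obtain ⟨hg, h, hh, hgh⟩ := mem_filter.1 hg
      exact mem_biUnion.2 ⟨h, hh, mem_filter.2 ⟨hg, hgh⟩⟩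
    exact (card_le_card this).trans (card_biUnion_le_card_mul _ _ _ fun h hh =>
      card_injections_image_eq_le (hH h hh) hf)
  refine le_trans ?_ hIcard
  refine mul_card_image_le_card_of_maps_to (f := fun g => H.image fun h => h.image g) ?_ a ?_
  · intro g hg
    obtain ⟨hg, h, hh, hgh⟩ := mem_filter.1 hg
    exact mem_filter.2 ⟨mem_image_of_mem _ hg, mem_image.2 ⟨h, hh, hgh⟩⟩
  · intro S hS
    obtain ⟨hS, hfS⟩ := mem_filter.1 hS
    obtain ⟨g, hg, rfl⟩ := mem_image.1 hS
    obtain ⟨h, hh, rfl⟩ := mem_image.1 hfS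
    have hginj := (mem_filter.1 hg).2
    refine (ha h hh).trans ?_
    rw [autFixCount, Nat.card_eq_fintype_card, ← card_univ]
    refine card_le_card_of_injOn (fun σ => g ∘ σ.1) ?_ ?_
    · intro σ _
      have h1 : H.image (fun f => f.image σ.1) = H :=
        eq_of_subset_of_card_le (image_subset_iff.2 σ.2.1)
          (card_image_of_injective _ (image_injective σ.1.injective)).ge
      refine mem_coe.2 (mem_filter.2 ⟨mem_filter.2 ⟨mem_filter.2 ⟨mem_univ _,
        hginj.comp σ.1.injective⟩, h, hh, ?_⟩, ?_⟩)
      · rw [← image_image, σ.2.2]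
      · conv_rhs => rw [← h1]
        rw [image_image]
        exact image_congr fun f _ => by simp [image_image]
    · intro σ _ τ _ hστ
      ext x
      exact congrArg Fin.val (hginj (congrFun hστ x))

lemma card_copies_two_le {r n : ℕ} {H : Finset (Finset (Fin m))} (hH : IsRGraph r H)
    (T : Finset (Fin n)) :
    #((copies H n).filter fun S => 2 ≤ #(S ∩ powersetCard r T)) ≤
      #H * #H * (#T ^ (r + 1) * n ^ (m - (r + 1))) := by
  classical
  have hsub : ((copies H n).filter fun S => 2 ≤ #(S ∩ powersetCard r T)) ⊆
      (((H ×ˢ H).filter fun q => q.1 ≠ q.2).biUnion fun q =>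
        (univ : Finset (Fin m → Fin n)).filter fun g => ∀ x ∈ q.1 ∪ q.2, g x ∈ T).image
        fun g => H.image fun f => f.image g := by
    intro S hS
    obtain ⟨hS, h2⟩ := mem_filter.1 hS
    obtain ⟨g, hg, rfl⟩ := mem_image.1 hS
    obtain ⟨x, hx, y, hy, hxy⟩ := one_lt_card.1 h2
    obtain ⟨hx, hxT⟩ := mem_inter.1 hx
    obtain ⟨hy, hyT⟩ := mem_inter.1 hy
    obtain ⟨f₁, hf₁, rfl⟩ := mem_image.1 hx
    obtain ⟨f₂, hf₂, rfl⟩ := mem_image.1 hy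
    refine mem_image_of_mem _ (mem_biUnion.2 ⟨(f₁, f₂), mem_filter.2 ⟨mem_product.2 ⟨hf₁, hf₂⟩,
      fun h => hxy (by simp_all)⟩, mem_filter.2 ⟨mem_univ _, fun z hz => ?_⟩⟩)
    rcases mem_union.1 hz with h | h
    · exact (mem_powersetCard.1 hxT).1 (mem_image_of_mem _ h)
    · exact (mem_powersetCard.1 hyT).1 (mem_image_of_mem _ h)
  refine (card_le_card hsub).trans (card_image_le.trans ?_)
  rw [← card_product]
  refine (card_biUnion_le_card_mul _ _ (#T ^ (r + 1) * n ^ (m - (r + 1))) ?_).trans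
    (Nat.mul_le_mul_right _ (card_filter_le _ _))
  intro q hq
  obtain ⟨hq, hne⟩ := mem_filter.1 hq
  obtain ⟨hq1, hq2⟩ := mem_product.1 hq
  obtain ⟨u, hu2, hu1⟩ : ∃ u ∈ q.2, u ∉ q.1 := by
    by_contra! h
    exact hne (eq_of_subset_of_card_le h (by rw [hH _ hq1, hH _ hq2])).symm
  have hA : #(insert u q.1) = r + 1 := by rw [card_insert_of_notMem hu1, hH _ hq1]
  rw [← hA, ← card_maps_into n (insert u q.1) T]
  refine card_le_card (monotone_filter_right _ fun g _ hg x hx => hg x ?_)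
  rcases mem_insert.1 hx with rfl | h
  · exact mem_union_right _ hu2
  · exact mem_union_left _ h

lemma exp_sub_one_le_of_le {j N : ℕ} (hj : j ≤ N) :
    Real.exp j - 1 ≤ (Real.exp 1 - 1) * j + Real.exp N * (if 2 ≤ j then 1 else 0) := by
  have h1 : 1 ≤ Real.exp 1 := Real.one_le_exp zero_le_one
  rcases j with _ | _ | j
  · simp
  · simp
  · have : Real.exp ((j + 1 + 1 : ℕ) : ℝ) ≤ Real.exp N :=
      Real.exp_le_exp.2 (by exact_mod_cast hj)
    have h2 : 0 ≤ (Real.exp 1 - 1) * ((j + 1 + 1 : ℕ) : ℝ) :=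
      mul_nonneg (by linarith) (Nat.cast_nonneg _)
    simp only [le_add_iff_nonneg_left, zero_le, if_true]
    linarith

/-- The expected exponential weight of the copies of `H` meeting the complete hypergraph
on `T`. -/
lemma sum_copies_exp_le {r n a : ℕ} (hapos : 0 < a) {H : Finset (Finset (Fin m))}
    (hH : IsRGraph r H) (ha : ∀ h ∈ H, a ≤ autFixCount H h) {p : ℝ} (hp : 0 ≤ p)
    (T : Finset (Fin n)) :
    ∑ S ∈ copies H n, (Real.exp #(S ∩ powersetCard r T) - 1) * p ^ #S ≤
      p ^ #H * ((Real.exp 1 - 1) *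
        ((#T).choose r * (#H * (r.factorial * (n : ℝ) ^ (m - r)) / a)) +
        Real.exp #H * (#H * #H * ((#T : ℝ) ^ (r + 1) * (n : ℝ) ^ (m - (r + 1))))) := by
  classical
  have h1 : (1 : ℝ) ≤ Real.exp 1 := Real.one_le_exp zero_le_one
  have hle : ∀ S ∈ copies H n, (Real.exp #(S ∩ powersetCard r T) - 1) * p ^ #S ≤
      p ^ #H * ((Real.exp 1 - 1) * #(S ∩ powersetCard r T) +
        Real.exp #H * (if 2 ≤ #(S ∩ powersetCard r T) then 1 else 0)) := by
    intro S hS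
    rw [card_of_mem_copies hS, mul_comm]
    refine mul_le_mul_of_nonneg_left (exp_sub_one_le_of_le ?_) (by positivity)
    exact (card_le_card inter_subset_left).trans (card_of_mem_copies hS).le
  refine (sum_le_sum hle).trans ?_
  rw [← mul_sum, sum_add_distrib, ← mul_sum, ← mul_sum, sum_boole]
  have hdeg : ∑ S ∈ copies H n, (#(S ∩ powersetCard r T) : ℝ) ≤
      (#T).choose r * (#H * (r.factorial * (n : ℝ) ^ (m - r)) / a) := by
    have hswap : ∑ S ∈ copies H n, #(S ∩ powersetCard r T) =
        ∑ f ∈ powersetCard r T, #((copies H n).filter fun S => f ∈ S) := by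
      simp only [card_filter]
      rw [sum_comm]
      refine sum_congr rfl fun S _ => ?_
      rw [← card_filter, inter_comm, filter_mem_eq_inter]
    rw [← Nat.cast_sum, hswap, Nat.cast_sum, ← card_powersetCard, ← nsmul_eq_mul]
    refine sum_le_card_nsmul _ _ _ fun f hf => ?_
    rw [le_div_iff₀ (by exact_mod_cast hapos), mul_comm]
    exact_mod_cast mul_card_copies_mem_le hH ha (mem_powersetCard.1 hf).2
  have htwo : (#((copies H n).filter fun S => 2 ≤ #(S ∩ powersetCard r T)) : ℝ) ≤
      #H * #H * ((#T : ℝ) ^ (r + 1) * (n : ℝ) ^ (m - (r + 1))) := by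
    exact_mod_cast card_copies_two_le hH T
  have h0 : 0 ≤ Real.exp 1 - 1 := by linarith
  gcongr

end Copies

lemma sum_biUnion_le_sum_sum {ι γ : Type*} [DecidableEq γ] (s : Finset ι) (c : ι → Finset γ)
    (w : γ → ℝ) (hw : ∀ x, 0 ≤ w x) :
    ∑ x ∈ s.biUnion c, w x ≤ ∑ i ∈ s, ∑ x ∈ c i, w x := by
  classical
  induction s using Finset.induction_on with
  | empty => simp
  | insert i s hi ih =>
    rw [biUnion_insert, sum_insert hi]
    have h := sum_union_inter (s₁ := c i) (s₂ := s.biUnion c) (f := w)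
    have h2 : 0 ≤ ∑ x ∈ c i ∩ s.biUnion c, w x := sum_nonneg fun x _ => hw x
    linarith

/-- The finite form of the deletion argument: explicit inequalities between the parameters that
guarantee a sparse hypergraph without copies of the `H i` and with large chromatic number. -/
theorem exists_free_not_colorable {r ℓ n t k : ℕ} (hr : 2 ≤ r) {v a : Fin ℓ → ℕ}
    {H : ∀ i : Fin ℓ, Finset (Finset (Fin (v i)))} (hH : ∀ i, IsRGraph r (H i))
    (hne : ∀ i, (H i).Nonempty) (hapos : ∀ i, 0 < a i)
    (ha : ∀ i, ∀ h ∈ H i, a i ≤ autFixCount (H i) h) {p M : ℝ} (hp0 : 0 ≤ p) (hp1 : p ≤ 1)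
    (hn : 0 < n) (hM : 0 < M) (hk : k * (t - 1) < n) (ht : 0 < t)
    (hcopies : ∑ i, p ^ #(H i) * ((Real.exp 1 - 1) *
        (t.choose r * (#(H i) * (r.factorial * (n : ℝ) ^ (v i - r)) / a i)) +
        Real.exp #(H i) * (#(H i) * #(H i) * ((t : ℝ) ^ (r + 1) * (n : ℝ) ^ (v i - (r + 1))))) ≤
      p * t.choose r / 20)
    (hlog : t * Real.log n + 2 ≤ p * t.choose r / 5)
    (hedges : p * n.choose r ≤ 2 / 3 * M) :
    ∃ G : Finset (Finset (Fin n)), IsRGraph r G ∧ (∀ i, ¬ HasCopy (H i) G) ∧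
      ¬ HypColorable G k ∧ (#G : ℝ) < M := by
  classical
  set N := t.choose r with hN
  set B : Finset (Finset (Finset (Fin n))) := univ.biUnion fun i => copies (H i) n with hBdef
  set Us : Finset (Finset (Finset (Fin n))) :=
    (powersetCard t univ).image fun T => powersetCard r T with hUsdef
  have hB : ∀ S ∈ B, S ⊆ powersetCard r univ := by
    intro S hS
    obtain ⟨i, _, hS⟩ := mem_biUnion.1 hS
    exact subset_powersetCard_of_mem_copies (hH i) hS
  have hBne : ∀ S ∈ B, S.Nonempty := by
    intro S hS
    obtain ⟨i, _, hS⟩ := mem_biUnion.1 hS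
    rw [← card_pos, card_of_mem_copies hS]
    exact (hne i).card_pos
  have hUs : ∀ U ∈ Us, U ⊆ powersetCard r univ := by
    intro U hU
    obtain ⟨T, _, rfl⟩ := mem_image.1 hU
    exact powersetCard_mono (subset_univ T)
  have he1 : (2.7 : ℝ) < Real.exp 1 := lt_trans (by norm_num) Real.exp_one_gt_d9
  have hpN : 0 ≤ p * N := by positivity
  have hterm : ∀ U ∈ Us, Real.exp (p * N / 4) * (1 - p * (1 - Real.exp (-1))) ^ #U +
      Real.exp (-(p * N / 4)) * ∏ S ∈ B, (1 + (Real.exp #(S ∩ U) - 1) * p ^ #S) ≤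
      2 * Real.exp (-(t * Real.log n + 2)) := by
    intro U hU
    obtain ⟨T, hT, rfl⟩ := mem_image.1 hU
    have hTt := (mem_powersetCard.1 hT).2
    have hcard : #(powersetCard r T) = N := by rw [card_powersetCard, hTt]
    have hinv : Real.exp (-1) ≤ 1 / 2 := by
      rw [Real.exp_neg, inv_le_comm₀ (Real.exp_pos _) (by norm_num)]
      linarith
    have h1 : Real.exp (p * N / 4) * (1 - p * (1 - Real.exp (-1))) ^ N ≤
        Real.exp (-(t * Real.log n + 2)) := by
      have hbase : (1 - p * (1 - Real.exp (-1))) ^ N ≤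
          Real.exp (-(p * (1 - Real.exp (-1)))) ^ N := by
        refine pow_le_pow_left₀ ?_ (Real.one_sub_le_exp_neg _) N
        nlinarith [Real.exp_pos (-1)]
      refine (mul_le_mul_of_nonneg_left hbase (Real.exp_pos _).le).trans ?_
      rw [← Real.exp_nat_mul, ← Real.exp_add]
      refine Real.exp_le_exp.2 ?_
      nlinarith
    have h2 : Real.exp (-(p * N / 4)) * ∏ S ∈ B,
        (1 + (Real.exp #(S ∩ powersetCard r T) - 1) * p ^ #S) ≤
        Real.exp (-(t * Real.log n + 2)) := by
      have hnn : ∀ S : Finset (Finset (Fin n)),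
          0 ≤ (Real.exp #(S ∩ powersetCard r T) - 1) * p ^ #S := fun S =>
        mul_nonneg (sub_nonneg.2 (Real.one_le_exp (Nat.cast_nonneg _))) (pow_nonneg hp0 _)
      have hprod : ∏ S ∈ B, (1 + (Real.exp #(S ∩ powersetCard r T) - 1) * p ^ #S) ≤
          Real.exp (p * N / 20) := by
        refine (prod_le_prod (fun S _ => by linarith [hnn S]) fun S _ =>
          (add_comm _ _).trans_le (Real.add_one_le_exp _)).trans ?_
        rw [← Real.exp_sum]
        refine Real.exp_le_exp.2 ((sum_biUnion_le_sum_sum _ _ _ hnn).trans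
          (le_trans (sum_le_sum fun i _ => ?_) hcopies))
        have := sum_copies_exp_le (hapos i) (hH i) (ha i) hp0 T
        rwa [hTt] at this
      refine (mul_le_mul_of_nonneg_left hprod (Real.exp_pos _).le).trans ?_
      rw [← Real.exp_add]
      refine Real.exp_le_exp.2 ?_
      linarith
    rw [hcard]
    linarith
  have hUscard : (#Us : ℝ) ≤ Real.exp (t * Real.log n) := by
    have h1 : #Us ≤ n ^ t := card_image_le.trans (by
      rw [card_powersetCard, card_univ, Fintype.card_fin]
      exact Nat.choose_le_pow _ _)
    rw [Real.exp_nat_mul, Real.exp_log (by exact_mod_cast hn)]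
    exact_mod_cast h1
  have hsum : ∑ U ∈ Us, (Real.exp (p * N / 4) * (1 - p * (1 - Real.exp (-1))) ^ #U +
      Real.exp (-(p * N / 4)) * ∏ S ∈ B, (1 + (Real.exp #(S ∩ U) - 1) * p ^ #S)) +
      p * #(powersetCard r (univ : Finset (Fin n))) / M < 1 := by
    have h1 := sum_le_card_nsmul _ _ _ hterm
    rw [nsmul_eq_mul] at h1
    have h2 : (#Us : ℝ) * (2 * Real.exp (-(t * Real.log n + 2))) ≤ 2 * Real.exp (-2) := by
      calc (#Us : ℝ) * (2 * Real.exp (-(t * Real.log n + 2)))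
          ≤ Real.exp (t * Real.log n) * (2 * Real.exp (-(t * Real.log n + 2))) := by gcongr
        _ = 2 * Real.exp (-2) := by
          rw [mul_left_comm, ← Real.exp_add]
          ring_nf
    have h3 : Real.exp (-2) < 1 / 6 := by
      rw [Real.exp_neg, inv_lt_comm₀ (Real.exp_pos _) (by norm_num),
        show (2 : ℝ) = 1 + 1 by norm_num, Real.exp_add]
      nlinarith
    have h4 : p * #(powersetCard r (univ : Finset (Fin n))) / M ≤ 2 / 3 := by
      rw [card_powersetCard, card_univ, Fintype.card_fin, div_le_iff₀ hM]
      exact hedges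
    linarith
  obtain ⟨G, hGE, hGM, hGB, hGU⟩ :=
    exists_subset_avoiding_meeting hp0 hp1 hB hBne hUs hM hsum
  refine ⟨G, fun f hf => (mem_powersetCard.1 (hGE hf)).2, ?_, ?_, hGM⟩
  · rintro i ⟨g, hg, hgG⟩
    refine hGB ((H i).image fun f => f.image g) (mem_biUnion.2 ⟨i, mem_univ _,
      mem_image_of_mem _ (mem_filter.2 ⟨mem_univ _, hg⟩)⟩) (image_subset_iff.2 fun f hf => ?_)
    convert hgG f hf
  · rintro ⟨c, hc⟩
    obtain ⟨y, hy⟩ := Fintype.exists_lt_card_fiber_of_mul_lt_card (f := c) (n := t - 1)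
      (by simpa using hk)
    obtain ⟨T, hTsub, hTcard⟩ := exists_subset_card_eq (show t ≤ #{x | c x = y} by omega)
    obtain ⟨f, hf⟩ := hGU (powersetCard r T)
      (mem_image_of_mem _ (mem_powersetCard.2 ⟨subset_univ T, hTcard⟩))
    obtain ⟨hfG, hfT⟩ := mem_inter.1 hf
    obtain ⟨hfT, hfr⟩ := mem_powersetCard.1 hfT
    obtain ⟨u, hu, w, hw, huw⟩ := hc f hfG (by omega)
    have hcol : ∀ x ∈ f, c x = y := fun x hx => (mem_filter.1 (hTsub (hfT hx))).2
    exact huw ((hcol u hu).trans (hcol w hw).symm)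

section Asymptotics

open Filter Topology

/-- The real number whose ceiling is used as the number of vertices. -/
noncomputable def vertexScale (K B : ℝ) (d k : ℕ) : ℝ :=
  (K * ((k : ℝ) ^ d * Real.log k)) ^ (1 / B)

lemma tendsto_log_natCast_atTop : Tendsto (fun k : ℕ => Real.log k) atTop atTop :=
  Real.tendsto_log_atTop.comp tendsto_natCast_atTop_atTop

lemma tendsto_vertexScale_div_atTop {K B : ℝ} (hK : 0 < K) (hB : 0 < B) {d : ℕ} (hBd : B < d) :
    Tendsto (fun k : ℕ => vertexScale K B d k / k) atTop atTop := by
  have h1 : Tendsto (fun k : ℕ => (K * ((k : ℝ) ^ ((d : ℝ) - B) * Real.log k)) ^ (1 / B))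
      atTop atTop :=
    (tendsto_rpow_atTop (by positivity)).comp ((((tendsto_rpow_atTop (sub_pos.2 hBd)).comp
      tendsto_natCast_atTop_atTop).atTop_mul_atTop₀ tendsto_log_natCast_atTop).const_mul_atTop hK)
  refine h1.congr' ?_
  filter_upwards [eventually_ge_atTop 1] with k hk
  have hk0 : (0 : ℝ) < k := by exact_mod_cast hk
  have hl : 0 ≤ Real.log k := Real.log_natCast_nonneg k
  have h2 : (k : ℝ) = ((k : ℝ) ^ B) ^ (1 / B) := by
    rw [← Real.rpow_mul hk0.le, mul_one_div_cancel hB.ne', Real.rpow_one]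
  have h3 : (K * ((k : ℝ) ^ ((d : ℝ) - B) * Real.log k)) =
      K * ((k : ℝ) ^ d * Real.log k) / (k : ℝ) ^ B := by
    rw [Real.rpow_sub hk0, Real.rpow_natCast]
    ring
  rw [vertexScale, h3, Real.div_rpow (by positivity) (by positivity), ← h2]

lemma tendsto_vertexScale_atTop {K B : ℝ} (hK : 0 < K) (hB : 0 < B) {d : ℕ} (hBd : B < d) :
    Tendsto (fun k : ℕ => vertexScale K B d k) atTop atTop := by
  refine tendsto_atTop_mono' _ ?_ (tendsto_vertexScale_div_atTop hK hB hBd)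
  filter_upwards [eventually_ge_atTop 1] with k hk
  refine div_le_self ?_ (by exact_mod_cast hk)
  have hl : 0 ≤ Real.log k := Real.log_natCast_nonneg k
  rw [vertexScale]
  positivity

lemma vertexScale_rpow {K : ℝ} (hK : 0 < K) (B : ℝ) (d k : ℕ) (q : ℝ) :
    vertexScale K B d k ^ q = (K * ((k : ℝ) ^ d * Real.log k)) ^ (q / B) := by
  have hl : 0 ≤ Real.log k := Real.log_natCast_nonneg k
  rw [vertexScale, ← Real.rpow_mul (by positivity), one_div_mul_eq_div]

lemma eventually_log_ceil_vertexScale_le {K B : ℝ} (hK : 0 < K) (hB : 0 < B) {d : ℕ}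
    (hBd : B < d) :
    ∀ᶠ k : ℕ in atTop, Real.log (⌈vertexScale K B d k⌉₊ : ℝ) ≤ 11 / 10 * (d / B) * Real.log k := by
  have hd : 0 < (d : ℝ) := hB.trans hBd
  have hlo : ∀ᶠ k : ℕ in atTop,
      Real.log 2 + 1 / B * (Real.log K + Real.log (Real.log k)) ≤ 1 / 10 * (d / B) * Real.log k := by
    have h1 : (fun x : ℝ => Real.log 2 + 1 / B * (Real.log K + Real.log x)) =o[atTop] fun x => x := by
      refine (Asymptotics.isLittleO_const_id_atTop _).add (Asymptotics.IsLittleO.const_mul_left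
        ((Asymptotics.isLittleO_const_id_atTop _).add Real.isLittleO_log_id_atTop) _)
    have h2 := tendsto_log_natCast_atTop.eventually (h1.bound (c := 1 / 10 * (d / B)) (by positivity))
    filter_upwards [h2, eventually_ge_atTop 1] with k hk hk1
    refine (le_abs_self _).trans (hk.trans_eq ?_)
    rw [Real.norm_of_nonneg (Real.log_natCast_nonneg k)]
  filter_upwards [hlo, (tendsto_vertexScale_atTop hK hB hBd).eventually_ge_atTop 1,
    tendsto_log_natCast_atTop.eventually_ge_atTop 1, eventually_ge_atTop 1] with k h1 h2 h3 h4
  have hk0 : (0 : ℝ) < k := by exact_mod_cast h4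
  have hl : 0 < Real.log k := by linarith
  have hceil : (⌈vertexScale K B d k⌉₊ : ℝ) ≤ 2 * vertexScale K B d k := by
    have := (Nat.ceil_lt_add_one (by linarith : 0 ≤ vertexScale K B d k)).le
    linarith
  have hpos : (0 : ℝ) < ⌈vertexScale K B d k⌉₊ := by
    have := Nat.le_ceil (vertexScale K B d k)
    linarith
  refine (Real.log_le_log hpos hceil).trans ?_
  rw [Real.log_mul (by norm_num) (by linarith), vertexScale, Real.log_rpow (by positivity),
    Real.log_mul hK.ne' (by positivity), Real.log_mul (by positivity) hl.ne', Real.log_pow]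
  have : 1 / B * (d * Real.log k) = d / B * Real.log k := by ring
  linear_combination h1 + this

lemma eventually_ceil_rpow_le {u : ℕ → ℝ} (hu : Tendsto u atTop atTop) (q : ℝ) :
    ∀ᶠ k in atTop, (⌈u k⌉₊ : ℝ) ^ q ≤ 5 / 4 * u k ^ q := by
  have h1 : Tendsto (fun k => ((⌈u k⌉₊ : ℝ) / u k) ^ q) atTop (𝓝 (1 ^ q)) :=
    ((tendsto_nat_ceil_div_atTop (R := ℝ)).comp hu).rpow_const (Or.inl one_ne_zero)
  rw [Real.one_rpow] at h1
  filter_upwards [h1.eventually_le_const (show (1 : ℝ) < 5 / 4 by norm_num),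
    hu.eventually_gt_atTop 0] with k h2 h3
  rwa [Real.div_rpow (Nat.cast_nonneg _) h3.le, div_le_iff₀ (by positivity)] at h2

lemma eventually_pow_le_choose {t : ℕ → ℕ} (ht : Tendsto t atTop atTop) (r : ℕ) :
    ∀ᶠ k in atTop, 9 / 10 * (t k : ℝ) ^ r / r.factorial ≤ (t k).choose r := by
  have h1 : Tendsto (fun k => (1 + (1 - r : ℝ) / (t k : ℝ)) ^ r) atTop (𝓝 ((1 + 0) ^ r)) :=
    ((tendsto_const_nhds.div_atTop (tendsto_natCast_atTop_atTop.comp ht)).const_add 1).pow r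
  rw [add_zero, one_pow] at h1
  filter_upwards [h1.eventually_const_le (show (9 / 10 : ℝ) < 1 by norm_num),
    ht.eventually_ge_atTop (r + 1)] with k h2 h3
  have ht0 : (0 : ℝ) < t k := by exact_mod_cast (by omega : 0 < t k)
  refine le_trans ?_ (Nat.pow_le_choose r (t k))
  have h4 : ((t k + 1 - r : ℕ) : ℝ) = (1 + (1 - r : ℝ) / t k) * t k := by
    rw [Nat.cast_sub (by omega)]
    push_cast
    field_simp
    ring
  rw [h4, mul_pow]
  gcongr

lemma tendsto_edgeProb_zero {n : ℕ → ℕ} (hn : Tendsto n atTop atTop) {θ : ℝ} (hθ : 0 < θ)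
    (c : ℝ) : Tendsto (fun k => c * (n k : ℝ) ^ (-θ)) atTop (𝓝 0) := by
  simpa using ((tendsto_rpow_neg_atTop hθ).comp
    (tendsto_natCast_atTop_atTop.comp hn)).const_mul c

lemma edgeProb_pow_mul_pow {n : ℕ} (hn : 0 < n) (c θ : ℝ) (a b : ℕ) :
    (c * (n : ℝ) ^ (-θ)) ^ a * (n : ℝ) ^ b = c ^ a * (n : ℝ) ^ (b - θ * a : ℝ) := by
  have hn0 : (0 : ℝ) < n := by exact_mod_cast hn
  rw [mul_pow, mul_assoc, ← Real.rpow_natCast _ b, ← Real.rpow_mul_natCast hn0.le,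
    ← Real.rpow_add hn0]
  ring_nf

lemma tendsto_edgeProb_pow_mul_pow {n : ℕ → ℕ} (hn : Tendsto n atTop atTop) (c θ : ℝ) (a b : ℕ)
    (hab : (b : ℝ) ≤ θ * a) :
    Tendsto (fun k => (c * (n k : ℝ) ^ (-θ)) ^ a * (n k : ℝ) ^ b) atTop
      (𝓝 (if (b : ℝ) = θ * a then c ^ a else 0)) := by
  have hcongr : (fun k => c ^ a * (n k : ℝ) ^ (b - θ * a : ℝ)) =ᶠ[atTop]
      fun k => (c * (n k : ℝ) ^ (-θ)) ^ a * (n k : ℝ) ^ b := by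
    filter_upwards [hn.eventually_gt_atTop 0] with k hk using (edgeProb_pow_mul_pow hk c θ a b).symm
  refine Tendsto.congr' hcongr ?_
  split_ifs with h
  · simp [h]
  · have h2 : 0 < θ * a - b := sub_pos.2 (lt_of_le_of_ne hab h)
    have := tendsto_edgeProb_zero hn h2 (c ^ a)
    simpa using this

/-- Asymptotic bound for the expected weight of the copies of the forbidden hypergraphs. -/
lemma eventually_sum_copies_le {r ℓ : ℕ} {n t : ℕ → ℕ} (hn : Tendsto n atTop atTop)
    (ht : Tendsto t atTop atTop) (htn : Tendsto (fun k => (t k : ℝ) / n k) atTop (𝓝 0))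
    {v e a : Fin ℓ → ℕ} (hv : ∀ i, r < v i) (he : ∀ i, 1 ≤ e i) {c θ L : ℝ} (hc : 0 < c)
    (hθ : ∀ i, ((v i - r : ℕ) : ℝ) ≤ θ * (e i - 1 : ℕ))
    (hL : (Real.exp 1 - 1) * r.factorial * ∑ i, (if ((v i - r : ℕ) : ℝ) = θ * (e i - 1 : ℕ) then
      e i * c ^ (e i - 1) / a i else 0) < L) :
    ∀ᶠ k in atTop, ∑ i, (c * (n k : ℝ) ^ (-θ)) ^ e i * ((Real.exp 1 - 1) *
        ((t k).choose r * (e i * (r.factorial * (n k : ℝ) ^ (v i - r)) / a i)) +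
        Real.exp (e i) * (e i * e i *
          ((t k : ℝ) ^ (r + 1) * (n k : ℝ) ^ (v i - (r + 1))))) ≤
      c * (n k : ℝ) ^ (-θ) * (t k).choose r * L := by
  set C : ℝ := 10 / 9 * r.factorial with hC
  set w : Fin ℓ → ℕ → ℝ := fun i k =>
    ((c * (n k : ℝ) ^ (-θ)) ^ (e i - 1) * (n k : ℝ) ^ (v i - r)) *
      ((Real.exp 1 - 1) * (e i * r.factorial / a i) +
        Real.exp (e i) * (e i * e i * (C * (t k / n k)))) with hw
  have hlim : Tendsto (fun k => ∑ i, w i k) atTop (𝓝 (∑ i,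
      (if ((v i - r : ℕ) : ℝ) = θ * (e i - 1 : ℕ) then c ^ (e i - 1) else 0) *
        ((Real.exp 1 - 1) * (e i * r.factorial / a i) +
          Real.exp (e i) * (e i * e i * (C * 0))))) :=
    tendsto_finsetSum _ fun i _ => (tendsto_edgeProb_pow_mul_pow hn c θ _ _ (hθ i)).mul
      ((((htn.const_mul C).const_mul _).const_mul _).const_add _)
  have hlt : ∑ i, (if ((v i - r : ℕ) : ℝ) = θ * (e i - 1 : ℕ) then c ^ (e i - 1) else 0) *
        ((Real.exp 1 - 1) * (e i * r.factorial / a i) +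
          Real.exp (e i) * (e i * e i * (C * 0))) < L := by
    refine lt_of_eq_of_lt ?_ hL
    rw [mul_sum]
    refine sum_congr rfl fun i _ => ?_
    split_ifs <;> ring
  filter_upwards [hlim.eventually_le_const hlt, eventually_pow_le_choose ht r,
    hn.eventually_gt_atTop 0, ht.eventually_gt_atTop 0] with k h1 h2 h3 h4
  have hn0 : (0 : ℝ) < n k := by exact_mod_cast h3
  have hp : 0 < c * (n k : ℝ) ^ (-θ) := by positivity
  refine le_trans ?_ (mul_le_mul_of_nonneg_left h1 (by positivity))
  rw [mul_sum]
  refine sum_le_sum fun i _ => ?_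
  simp only [hw]
  set p := c * (n k : ℝ) ^ (-θ) with hpdef
  have hpe : p ^ e i = p * p ^ (e i - 1) := by
    rw [← pow_succ', Nat.sub_add_cancel (he i)]
  have hnv : (n k : ℝ) ^ (v i - r) = (n k : ℝ) ^ (v i - (r + 1)) * n k := by
    rw [← pow_succ]
    congr 1
    have := hv i
    omega
  have htr : (t k : ℝ) ^ r ≤ C * (t k).choose r := by
    rw [div_le_iff₀ (by positivity)] at h2
    rw [hC]
    linarith
  have key : (t k : ℝ) ^ (r + 1) ≤ (t k).choose r * (C * t k) := by
    rw [pow_succ]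
    nlinarith [(Nat.cast_nonneg (t k) : (0 : ℝ) ≤ t k)]
  calc _ ≤ p ^ e i * ((Real.exp 1 - 1) *
        ((t k).choose r * (e i * (r.factorial * (n k : ℝ) ^ (v i - r)) / a i)) +
        Real.exp (e i) * (e i * e i *
          ((t k).choose r * (C * t k) * (n k : ℝ) ^ (v i - (r + 1))))) := by
        gcongr
    _ = _ := by
      rw [hpe, hnv]
      field_simp

end Asymptotics

lemma autFixCount_pos {m : ℕ} (H : Finset (Finset (Fin m))) (f : Finset (Fin m)) :
    0 < autFixCount H f := by
  classical
  rw [autFixCount, Nat.card_eq_fintype_card, Fintype.card_pos_iff]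
  exact ⟨⟨1, fun f hf => by simpa using hf, by simp⟩⟩

open Filter Topology in
/-- Every sufficiently large `k` admits parameters for the deletion argument. The set size `t` is
`⌈n / k⌉`, the number of vertices is `n = ⌈vertexScale K B (r - 1) k⌉`. -/
theorem eventually_exists_free_not_colorable {r ℓ : ℕ} (hr : 2 ≤ r) {v e a : Fin ℓ → ℕ}
    {H : ∀ i : Fin ℓ, Finset (Finset (Fin (v i)))} (hH : ∀ i, IsRGraph r (H i))
    (hecard : ∀ i, #(H i) = e i) (he : ∀ i, 1 ≤ e i) (hv : ∀ i, r < v i) (hapos : ∀ i, 0 < a i)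
    (ha : ∀ i, ∀ h ∈ H i, a i ≤ autFixCount (H i) h) {c θ B : ℝ} (hc : 0 < c) (hθ0 : 0 < θ)
    (hB : 0 < B) (hBθ : B = (r - 1 : ℕ) - θ)
    (hθ : ∀ i, ((v i - r : ℕ) : ℝ) ≤ θ * (e i - 1 : ℕ))
    (hL : r.factorial * ∑ i, (if ((v i - r : ℕ) : ℝ) = θ * (e i - 1 : ℕ) then
      e i * c ^ (e i - 1) / a i else 0) ≤ (1 / 50 : ℝ)) :
    ∀ᶠ k : ℕ in atTop, ∃ (n : ℕ) (G : Finset (Finset (Fin n))), IsRGraph r G ∧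
      (∀ i, ¬ HasCopy (H i) G) ∧ ¬ HypColorable G k ∧
      (#G : ℝ) < 15 / 8 * (c / r.factorial) *
        vertexScale (10 * (r.factorial / c) * ((r - 1 : ℕ) / B)) B (r - 1) k ^ (r - θ) := by
  set d := r - 1 with hd
  have hBd : B < d := by linarith
  have hd0 : (0 : ℝ) < d := hB.trans hBd
  set K : ℝ := 10 * (r.factorial / c) * (d / B) with hKdef
  have hK : 0 < K := by positivity
  set X : ℕ → ℝ := vertexScale K B d with hX
  set n : ℕ → ℕ := fun k => ⌈X k⌉₊ with hndef
  set t : ℕ → ℕ := fun k => ⌈(n k : ℝ) / k⌉₊ with htdef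
  have hXtop : Tendsto X atTop atTop := tendsto_vertexScale_atTop hK hB hBd
  have hn : Tendsto n atTop atTop := tendsto_nat_ceil_atTop.comp hXtop
  have ht : Tendsto t atTop atTop := by
    refine tendsto_nat_ceil_atTop.comp
      (tendsto_atTop_mono (fun k => ?_) (tendsto_vertexScale_div_atTop hK hB hBd))
    gcongr
    exact Nat.le_ceil _
  have htn : Tendsto (fun k => (t k : ℝ) / n k) atTop (𝓝 0) := by
    have h1 : Tendsto (fun k : ℕ => (1 : ℝ) / k + 1 / n k) atTop (𝓝 (0 + 0)) :=
      tendsto_one_div_atTop_nhds_zero_nat.add (tendsto_one_div_atTop_nhds_zero_nat.comp hn)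
    rw [add_zero] at h1
    refine squeeze_zero' (Eventually.of_forall fun k => by positivity) ?_ h1
    filter_upwards [hn.eventually_gt_atTop 0] with k hk
    have hn0 : (0 : ℝ) < n k := by exact_mod_cast hk
    rw [div_le_iff₀ hn0, add_mul, one_div_mul_eq_div, one_div_mul_cancel hn0.ne']
    exact (Nat.ceil_lt_add_one (by positivity)).le
  have hL' : (Real.exp 1 - 1) * r.factorial *
      ∑ i, (if ((v i - r : ℕ) : ℝ) = θ * (e i - 1 : ℕ) then
        e i * c ^ (e i - 1) / a i else 0) < (1 / 20 : ℝ) := by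
    have := Real.exp_one_lt_d9
    have h1 : 1 ≤ Real.exp 1 := Real.one_le_exp zero_le_one
    rw [mul_assoc]
    refine (mul_le_mul_of_nonneg_left hL (by linarith)).trans_lt ?_
    linarith
  have hlogn : Tendsto (fun k => Real.log (n k)) atTop atTop := tendsto_log_natCast_atTop.comp hn
  filter_upwards [eventually_sum_copies_le hn ht htn hv he hc hθ hL',
    eventually_pow_le_choose ht r, hn.eventually_gt_atTop 0, ht.eventually_gt_atTop 1,
    eventually_gt_atTop 0, hlogn.eventually_ge_atTop 4, hXtop.eventually_gt_atTop 0,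
    eventually_log_ceil_vertexScale_le hK hB hBd, eventually_ceil_rpow_le hXtop (r - θ),
    (tendsto_edgeProb_zero hn hθ0 c).eventually_le_const zero_lt_one]
    with k hsum hchoose hn0 ht0 hk0 hlog4 hX0 hlogk hceil hp1
  have hn0' : (0 : ℝ) < n k := by exact_mod_cast hn0
  have hk0' : (0 : ℝ) < k := by exact_mod_cast hk0
  have ht0' : (1 : ℝ) < t k := by exact_mod_cast ht0
  have hfac : (0 : ℝ) < r.factorial := by exact_mod_cast r.factorial_pos
  set p := c * (n k : ℝ) ^ (-θ) with hp
  have hp0 : 0 < p := by positivity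
  have hnr : p * (n k : ℝ) ^ r = c * (n k : ℝ) ^ (r - θ) := by
    rw [hp, mul_assoc, ← Real.rpow_natCast, ← Real.rpow_add hn0']
    ring_nf
  have hcolor : k * (t k - 1) < n k := by
    have h1 : (t k : ℝ) < n k / k + 1 := Nat.ceil_lt_add_one (by positivity)
    have h2 : ((t k - 1 : ℕ) : ℝ) < n k / k := by
      rw [Nat.cast_sub ht0.le]
      push_cast
      linarith
    rw [lt_div_iff₀' hk0'] at h2
    exact_mod_cast h2
  have hmean : 8 * (t k * Real.log (n k)) ≤ p * (t k).choose r := by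
    have h1 : (n k : ℝ) / k ≤ t k := Nat.le_ceil _
    have h2 : p * ((n k : ℝ) / k) ^ d = c * (n k : ℝ) ^ B / k ^ d := by
      rw [div_pow, hp, ← mul_div_assoc, mul_assoc, ← Real.rpow_natCast (n k : ℝ),
        ← Real.rpow_add hn0', hBθ]
      ring_nf
    have h3 : K * (k ^ d * Real.log k) ≤ (n k : ℝ) ^ B := by
      have h4 : X k ^ B = K * (k ^ d * Real.log k) := by
        rw [hX, vertexScale_rpow hK, div_self hB.ne', Real.rpow_one]
      rw [← h4]
      exact Real.rpow_le_rpow hX0.le (Nat.le_ceil _) hB.le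
    have h5 : 10 * r.factorial * (d / B * Real.log k) ≤ p * (t k : ℝ) ^ d := by
      calc 10 * r.factorial * (d / B * Real.log k) = c * (K * (k ^ d * Real.log k)) / k ^ d := by
            rw [hKdef]
            field_simp
        _ ≤ c * (n k : ℝ) ^ B / k ^ d := by gcongr
        _ = p * ((n k : ℝ) / k) ^ d := h2.symm
        _ ≤ p * (t k : ℝ) ^ d := by gcongr
    have h6 : 10 / 11 * Real.log (n k) ≤ d / B * Real.log k := by
      linarith
    have h7 : 100 / 11 * r.factorial * Real.log (n k) ≤ p * (t k : ℝ) ^ d := by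
      nlinarith
    have h8 : (t k : ℝ) ^ r = t k * (t k : ℝ) ^ d := by
      rw [← pow_succ', hd, Nat.sub_add_cancel (by omega)]
    calc 8 * (t k * Real.log (n k)) ≤ 90 / 11 * (t k * Real.log (n k)) := by
          have : 0 ≤ t k * Real.log (n k) := by positivity
          linarith
      _ = 9 / 10 * t k * (100 / 11 * r.factorial * Real.log (n k)) / r.factorial := by
          field_simp
          norm_num
      _ ≤ 9 / 10 * t k * (p * (t k : ℝ) ^ d) / r.factorial := by gcongr
      _ = p * (9 / 10 * (t k : ℝ) ^ r / r.factorial) := by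
          rw [h8]
          ring
      _ ≤ p * (t k).choose r := by gcongr
  set M := 3 / 2 * (c / r.factorial) * (n k : ℝ) ^ (r - θ) with hM
  obtain ⟨G, h1, h2, h3, h4⟩ := exists_free_not_colorable (t := t k) (k := k) (M := M) hr hH
    (fun i => card_pos.1 (by have := he i; have := hecard i; omega)) hapos ha hp0.le hp1 hn0
    (by positivity) hcolor (by omega) (by simp only [hecard]; linarith) (by nlinarith) (by
      calc p * (n k).choose r ≤ p * ((n k : ℝ) ^ r / r.factorial) := by
            gcongr
            exact Nat.choose_le_pow_div r (n k)
        _ = 2 / 3 * M := by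
            rw [← mul_div_assoc, hnr, hM]
            ring)
  refine ⟨n k, G, h1, h2, h3, h4.trans_le ?_⟩
  calc M ≤ 3 / 2 * (c / r.factorial) * (5 / 4 * X k ^ (r - θ)) :=
        mul_le_mul_of_nonneg_left hceil (by positivity)
    _ = _ := by ring

end Auxiliary

/-- **Theorem (general upper bound).** Let `𝓗 = {H₁, …, H_ℓ}` be a family of nontrivial
balanced `r`-graphs, `Hᵢ` having `v i` vertices (all spanned by edges), `e i` edges and
density `ρᵢ = (eᵢ-1)/(vᵢ-r)`, sorted so that `ρ₁ ≤ ⋯ ≤ ρ_ℓ`, with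
`ρ := ρ₁ = ⋯ = ρ_s < ρ_{s+1}` and `ρ > 1/(r-1)`. With `αᵢ` the minimum over edges `ed` of
`Hᵢ` of the number of automorphisms of `Hᵢ` fixing `ed`, `c₁` the positive solution of
`∑_{i≤s} eᵢ x^(eᵢ-1)/αᵢ = 1/(50 r!)`, and
`c₂ = max_{i≤s} (αᵢ/(5 eᵢ c₁^(eᵢ-1) r!))^(1/(r-1))`, for all sufficiently large `k` there
is an `𝓗`-free `r`-graph with chromatic number greater than `k` and fewer than
`c_𝓗 (k^(r-1) log k)^((r-1/ρ)/(r-1-1/ρ))` edges, where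
`c_𝓗 = 2 (r!/c₁)^(1/(r-1-1/ρ)) c₂^((r-1)(r-1/ρ)/(r-1-1/ρ)) ((r-1)/(r-1-1/ρ))^((r-1/ρ)/(r-1-1/ρ))`. -/
theorem general_upper_bound
    (r ℓ s : ℕ) (hr : 2 ≤ r) (hs1 : 1 ≤ s) (hsℓ : s ≤ ℓ)
    (v e : Fin ℓ → ℕ)
    (H : ∀ i : Fin ℓ, Finset (Finset (Fin (v i))))
    (hHr : ∀ i, IsRGraph r (H i))
    (hspan : ∀ i, (H i).sup id = Finset.univ)
    (hecard : ∀ i, (H i).card = e i)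
    (hnontriv : ∀ i, 2 ≤ e i)
    (ρ : ℝ)
    (hρeq : ∀ i : Fin ℓ, (i : ℕ) < s → ((e i : ℝ) - 1) / ((v i : ℝ) - r) = ρ)
    (hρlt : ∀ i : Fin ℓ, s ≤ (i : ℕ) → ρ < ((e i : ℝ) - 1) / ((v i : ℝ) - r))
    (hsorted : ∀ i j : Fin ℓ, i ≤ j →
      ((e i : ℝ) - 1) / ((v i : ℝ) - r) ≤ ((e j : ℝ) - 1) / ((v j : ℝ) - r))
    (hbalanced : ∀ i : Fin ℓ, ∀ E' ⊆ H i, 2 ≤ E'.card →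
      ((E'.card : ℝ) - 1) / (((E'.sup id).card : ℝ) - r) ≤ ((e i : ℝ) - 1) / ((v i : ℝ) - r))
    (hρ : 1 / ((r : ℝ) - 1) < ρ)
    (α : Fin ℓ → ℕ)
    (hα : ∀ i : Fin ℓ,
      (∃ ed ∈ H i, autFixCount (H i) ed = α i) ∧ ∀ ed ∈ H i, α i ≤ autFixCount (H i) ed)
    (c₁ : ℝ) (hc₁pos : 0 < c₁)
    (hc₁ : ∑ i ∈ Finset.univ.filter (fun i : Fin ℓ => (i : ℕ) < s),
        (e i : ℝ) * c₁ ^ (e i - 1) / (α i : ℝ) = 1 / (50 * (r.factorial : ℝ)))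
    (c₂ : ℝ)
    (hc₂ : IsGreatest {x : ℝ | ∃ i : Fin ℓ, (i : ℕ) < s ∧
        x = ((α i : ℝ) / (5 * (e i : ℝ) * c₁ ^ (e i - 1) * (r.factorial : ℝ)))
          ^ (1 / ((r : ℝ) - 1))} c₂) :
    ∃ k₀ : ℕ, ∀ k : ℕ, k₀ ≤ k →
      ∃ (n : ℕ) (G : Finset (Finset (Fin n))),
        IsRGraph r G ∧
        (∀ i : Fin ℓ, ¬ HasCopy (H i) G) ∧
        ¬ HypColorable G k ∧
        (G.card : ℝ) <
          (2 * ((r.factorial : ℝ) / c₁) ^ (1 / ((r : ℝ) - 1 - 1 / ρ)) *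
            c₂ ^ (((r : ℝ) - 1) * ((r : ℝ) - 1 / ρ) / ((r : ℝ) - 1 - 1 / ρ)) *
            (((r : ℝ) - 1) / ((r : ℝ) - 1 - 1 / ρ))
              ^ (((r : ℝ) - 1 / ρ) / ((r : ℝ) - 1 - 1 / ρ))) *
          ((k : ℝ) ^ (r - 1) * Real.log k)
            ^ (((r : ℝ) - 1 / ρ) / ((r : ℝ) - 1 - 1 / ρ)) := by
  have hr1 : (2 : ℝ) ≤ r := by exact_mod_cast hr
  have hd : ((r - 1 : ℕ) : ℝ) = r - 1 := by
    rw [Nat.cast_sub (by omega), Nat.cast_one]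
  have hρ0 : 0 < ρ := lt_trans (by apply one_div_pos.2; linarith) hρ
  set θ : ℝ := 1 / ρ with hθdef
  have hθ0 : 0 < θ := one_div_pos.2 hρ0
  set B : ℝ := r - 1 - θ with hBdef
  have hB : 0 < B := by
    have : θ < r - 1 := (one_div_lt (by linarith) hρ0).1 hρ
    linarith
  have he : ∀ i, 1 ≤ e i := fun i => le_trans (by norm_num) (hnontriv i)
  have hecast : ∀ i, ((e i - 1 : ℕ) : ℝ) = e i - 1 := fun i => by
    rw [Nat.cast_sub (he i), Nat.cast_one]
  have hepos : ∀ i, 0 < (e i : ℝ) - 1 := fun i => by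
    have : (2 : ℝ) ≤ e i := by exact_mod_cast hnontriv i
    linarith
  have hρle : ∀ i, ρ ≤ ((e i : ℝ) - 1) / ((v i : ℝ) - r) := fun i => by
    rcases lt_or_ge (i : ℕ) s with h | h
    · exact (hρeq i h).ge
    · exact (hρlt i h).le
  have hvpos : ∀ i, 0 < (v i : ℝ) - r := fun i =>
    (div_pos_iff_of_pos_left (hepos i)).1 (hρ0.trans_le (hρle i))
  have hv : ∀ i, r < v i := fun i => by exact_mod_cast sub_pos.1 (hvpos i)
  have hvcast : ∀ i, ((v i - r : ℕ) : ℝ) = v i - r := fun i => Nat.cast_sub (hv i).le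
  have hθle : ∀ i, ((v i - r : ℕ) : ℝ) ≤ θ * (e i - 1 : ℕ) := fun i => by
    rw [hvcast, hecast, hθdef, one_div_mul_eq_div, le_div_iff₀ hρ0, mul_comm]
    exact (le_div_iff₀ (hvpos i)).1 (hρle i)
  have hθeq : ∀ i, ((v i - r : ℕ) : ℝ) = θ * (e i - 1 : ℕ) ↔ (i : ℕ) < s := fun i => by
    rw [hvcast, hecast, hθdef, one_div_mul_eq_div, eq_div_iff hρ0.ne', mul_comm]
    constructor
    · intro h
      by_contra hi
      exact (hρlt i (not_lt.1 hi)).ne ((eq_div_iff (hvpos i).ne').2 h)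
    · intro hi
      exact (eq_div_iff (hvpos i).ne').1 (hρeq i hi).symm
  have hαpos : ∀ i, 0 < α i := fun i => by
    obtain ⟨f, _, hf⟩ := (hα i).1
    rw [← hf]
    exact autFixCount_pos _ _
  have hfac : (0 : ℝ) < r.factorial := by exact_mod_cast r.factorial_pos
  have hL : r.factorial * ∑ i, (if ((v i - r : ℕ) : ℝ) = θ * (e i - 1 : ℕ) then
      e i * c₁ ^ (e i - 1) / α i else 0) ≤ (1 / 50 : ℝ) := by
    simp only [hθeq]
    rw [← Finset.sum_filter, hc₁]
    apply le_of_eq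
    field_simp
  have hev := eventually_exists_free_not_colorable hr hHr hecard he hv hαpos
    (fun i => (hα i).2) hc₁pos hθ0 hB (by rw [hd]) hθle hL
  have hc₂ge : (10 : ℝ) ^ (1 / ((r : ℝ) - 1)) ≤ c₂ := by
    set i₀ : Fin ℓ := ⟨0, by omega⟩
    have hi₀ : (i₀ : ℕ) < s := hs1
    refine le_trans ?_ (hc₂.2 ⟨i₀, hi₀, rfl⟩)
    refine Real.rpow_le_rpow (by norm_num) ?_ (one_div_nonneg.2 (by linarith))
    have hterm : (e i₀ : ℝ) * c₁ ^ (e i₀ - 1) / α i₀ ≤ 1 / (50 * r.factorial) := by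
      rw [← hc₁]
      exact Finset.single_le_sum (f := fun i => (e i : ℝ) * c₁ ^ (e i - 1) / α i)
        (fun i _ => by positivity) (Finset.mem_filter.2 ⟨Finset.mem_univ _, hi₀⟩)
    have hα0 : (0 : ℝ) < α i₀ := by exact_mod_cast hαpos i₀
    have he0 : (0 : ℝ) < e i₀ := by linarith [hepos i₀]
    rw [div_le_div_iff₀ hα0 (by positivity)] at hterm
    rw [le_div_iff₀ (by positivity)]
    linarith
  obtain ⟨k₀, hk₀⟩ := Filter.eventually_atTop.1 (hev.and (Filter.eventually_ge_atTop 2))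
  refine ⟨k₀, fun k hk => ?_⟩
  obtain ⟨⟨n, G, h1, h2, h3, h4⟩, hk2⟩ := hk₀ k hk
  refine ⟨n, G, h1, h2, h3, h4.trans ?_⟩
  set γ : ℝ := (r - θ) / B with hγ
  have hγ1 : γ = 1 + 1 / B := by
    rw [hγ]
    field_simp
    rw [hBdef]
    ring
  have hlog : 0 < Real.log k := Real.log_pos (by exact_mod_cast hk2)
  have hk0 : (0 : ℝ) < k := by positivity
  have hQ : 0 < (k : ℝ) ^ (r - 1) * Real.log k := by positivity
  have hdB : 0 < ((r : ℝ) - 1) / B := div_pos (by linarith) hB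
  have hγ0 : 0 < γ := by
    rw [hγ1]
    positivity
  rw [hd, vertexScale_rpow (by positivity), ← hγ, Real.mul_rpow (by positivity) hQ.le,
    Real.mul_rpow (by positivity) hdB.le, Real.mul_rpow (by norm_num) (by positivity)]
  have hc₂pow : (10 : ℝ) ^ γ ≤ c₂ ^ (((r : ℝ) - 1) * (r - θ) / B) := by
    rw [mul_div_assoc, ← hγ]
    calc (10 : ℝ) ^ γ = ((10 : ℝ) ^ (1 / ((r : ℝ) - 1))) ^ (((r : ℝ) - 1) * γ) := by
          rw [← Real.rpow_mul (by norm_num), ← mul_assoc,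
            one_div_mul_cancel (by linarith), one_mul]
      _ ≤ _ := Real.rpow_le_rpow (by positivity) hc₂ge
          (mul_nonneg (by linarith) hγ0.le)
  have hfc : c₁ / r.factorial * ((r.factorial : ℝ) / c₁) ^ γ = (r.factorial / c₁) ^ (1 / B) := by
    rw [hγ1, Real.rpow_add (by positivity), Real.rpow_one]
    field_simp
  have hpos : 0 < ((r.factorial : ℝ) / c₁) ^ (1 / B) * 10 ^ γ * (((r : ℝ) - 1) / B) ^ γ *
      ((k : ℝ) ^ (r - 1) * Real.log k) ^ γ := by positivity
  calc _ = 15 / 8 * (((r.factorial : ℝ) / c₁) ^ (1 / B) * 10 ^ γ * (((r : ℝ) - 1) / B) ^ γ *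
        ((k : ℝ) ^ (r - 1) * Real.log k) ^ γ) := by
        rw [← hfc]
        ring
    _ < 2 * (((r.factorial : ℝ) / c₁) ^ (1 / B) * 10 ^ γ * (((r : ℝ) - 1) / B) ^ γ *
        ((k : ℝ) ^ (r - 1) * Real.log k) ^ γ) := by linarith
    _ = 2 * ((r.factorial : ℝ) / c₁) ^ (1 / B) * 10 ^ γ * (((r : ℝ) - 1) / B) ^ γ *
        ((k : ℝ) ^ (r - 1) * Real.log k) ^ γ := by ring
    _ ≤ _ := by gcongr
end

section
/- Fix 2 ≤ l < r. For all sufficiently large k, m_k(r,l) < c_{r,l} · (k^{r−1} log k)^{l/(l−1)}, where c_{r,l} = 2 · (100·((r)_l)^2/l!)^{1/(l−1)} · (10(r−1)/(l−1))^{l/(l−1)} and (r)_l = r(r−1)···(r−l+1) is the falling factorial. That is, there exists an (r,l)-system with chromatic number greater than k and fewer than c_{r,l} (k^{r−1} log k)^{l/(l−1)} edges. -/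
/-- An `(r,l)`-system: an `r`-uniform hypergraph in which every two distinct edges
share fewer than `l` vertices. -/
def IsRLSystem (r l : ℕ) {V : Type*} [DecidableEq V] (E : Finset (Finset V)) : Prop :=
  IsRGraph r E ∧ ∀ e ∈ E, ∀ f ∈ E, e ≠ f → (e ∩ f).card < l

section

open Finset

variable {V : Type*} [DecidableEq V]

/-- The `l`-subsets of `S` contained in some edge of `E`. -/
def coveredSubsets (l : ℕ) (E : Finset (Finset V)) (S : Finset V) : Finset (Finset V) :=
  {L ∈ S.powersetCard l | ∃ e ∈ E, L ⊆ e}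

/-- Add `e` to `E` provided it meets every edge of `E` in fewer than `l` vertices. -/
def greedyExtend (l : ℕ) (E : Finset (Finset V)) (e : Finset V) : Finset (Finset V) :=
  if ∀ f ∈ E, (e ∩ f).card < l then insert e E else E

theorem subset_greedyExtend (l : ℕ) (E : Finset (Finset V)) (e : Finset V) :
    E ⊆ greedyExtend l E e := by
  unfold greedyExtend
  split_ifs
  · exact subset_insert _ _
  · exact Subset.rfl

theorem greedyExtend_subset (l : ℕ) (E : Finset (Finset V)) (e : Finset V) :
    greedyExtend l E e ⊆ insert e E := by
  unfold greedyExtend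
  split_ifs
  · exact Subset.rfl
  · exact subset_insert _ _

theorem card_greedyExtend_le (l : ℕ) (E : Finset (Finset V)) (e : Finset V) :
    (greedyExtend l E e).card ≤ E.card + 1 :=
  (card_le_card (greedyExtend_subset l E e)).trans (card_insert_le _ _)

theorem IsRLSystem.greedyExtend {r l : ℕ} {E : Finset (Finset V)} (hE : IsRLSystem r l E)
    {e : Finset V} (he : e.card = r) : IsRLSystem r l (greedyExtend l E e) := by
  unfold _root_.greedyExtend
  split_ifs with h
  · refine ⟨fun f hf => ?_, fun f hf g hg hfg => ?_⟩
    · rcases mem_insert.1 hf with rfl | hf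
      · exact he
      · exact hE.1 f hf
    · rcases mem_insert.1 hf with rfl | hfE
      · exact h g ((mem_insert.1 hg).resolve_left hfg.symm)
      · rcases mem_insert.1 hg with rfl | hgE
        · rw [inter_comm]
          exact h f hfE
        · exact hE.2 f hfE g hgE hfg
  · exact hE

theorem coveredSubsets_mono {l : ℕ} {E F : Finset (Finset V)} (h : E ⊆ F) (S : Finset V) :
    coveredSubsets l E S ⊆ coveredSubsets l F S := by
  intro L hL
  simp only [coveredSubsets, mem_filter] at hL ⊢
  obtain ⟨hLS, e, he, hLe⟩ := hL
  exact ⟨hLS, e, h he, hLe⟩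

theorem card_coveredSubsets_greedyExtend_le (l : ℕ) (E : Finset (Finset V)) (e S : Finset V) :
    (coveredSubsets l (greedyExtend l E e) S).card ≤
      (coveredSubsets l E S).card + {L ∈ S.powersetCard l | L ⊆ e}.card := by
  refine (card_le_card fun L hL => ?_).trans (card_union_le _ _)
  simp only [coveredSubsets, mem_filter, mem_union] at hL ⊢
  obtain ⟨hLS, f, hf, hLf⟩ := hL
  rcases mem_insert.1 (greedyExtend_subset l E e hf) with rfl | hf
  · exact Or.inr ⟨hLS, hLf⟩
  · exact Or.inl ⟨hLS, f, hf, hLf⟩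

theorem mem_greedyExtend_of_forall_not_subset {l : ℕ} {E : Finset (Finset V)} {e S : Finset V}
    (heS : e ⊆ S) (h : ∀ L ∈ coveredSubsets l E S, ¬ L ⊆ e) : e ∈ greedyExtend l E e := by
  unfold greedyExtend
  rw [if_pos]
  · exact mem_insert_self _ _
  · intro f hf
    by_contra! hlt
    obtain ⟨L, hL, hLc⟩ := exists_subset_card_eq hlt
    refine h L ?_ (hL.trans inter_subset_left)
    simp only [coveredSubsets, mem_filter, mem_powersetCard]
    exact ⟨⟨(hL.trans inter_subset_left).trans heS, hLc⟩, f, hf, hL.trans inter_subset_right⟩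

theorem card_filter_subset_powersetCard_le {S L : Finset V} (hL : L ⊆ S) (r : ℕ) :
    {e ∈ S.powersetCard r | L ⊆ e}.card ≤ (S.card - L.card).choose (r - L.card) := by
  rw [← card_sdiff_of_subset hL, ← card_powersetCard]
  refine card_le_card_of_injOn (fun e => e \ L) (fun e he => ?_) (fun e he f hf hef => ?_)
  · simp only [coe_filter, mem_powersetCard, Set.mem_ofPred_eq, mem_coe] at he ⊢
    exact ⟨sdiff_subset_sdiff he.1.1 Subset.rfl, by rw [card_sdiff_of_subset he.2, he.1.2]⟩
  · simp only [coe_filter, mem_powersetCard, Set.mem_ofPred_eq] at he hf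
    rw [← sdiff_union_of_subset he.2, ← sdiff_union_of_subset hf.2]
    exact congrArg (· ∪ L) hef

variable [Fintype V]

theorem choose_sub_le_card_filter_accepted (r l : ℕ) (E : Finset (Finset V)) (S : Finset V) :
    S.card.choose r ≤ {e ∈ (univ : Finset V).powersetCard r | ∃ f ∈ greedyExtend l E e, f ⊆ S}.card +
      (coveredSubsets l E S).card * (S.card - l).choose (r - l) := by
  have hsub : S.powersetCard r ⊆ {e ∈ (univ : Finset V).powersetCard r | ∃ f ∈ greedyExtend l E e, f ⊆ S} ∪
      (coveredSubsets l E S).biUnion fun L => {e ∈ S.powersetCard r | L ⊆ e} := by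
    intro e he
    by_cases h : ∀ L ∈ coveredSubsets l E S, ¬ L ⊆ e
    · have heS := (mem_powersetCard.1 he).1
      exact mem_union_left _ (mem_filter.2 ⟨powersetCard_mono (subset_univ _) he, e,
        mem_greedyExtend_of_forall_not_subset heS h, heS⟩)
    · push Not at h
      obtain ⟨L, hL, hLe⟩ := h
      exact mem_union_right _ (mem_biUnion.2 ⟨L, hL, mem_filter.2 ⟨he, hLe⟩⟩)
  rw [← card_powersetCard]
  refine (card_le_card hsub).trans ((card_union_le _ _).trans (Nat.add_le_add_left ?_ _))
  refine card_biUnion_le_card_mul _ _ _ fun L hL => ?_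
  obtain ⟨hLS, hLc⟩ := mem_powersetCard.1 (mem_filter.1 hL).1
  exact hLc ▸ card_filter_subset_powersetCard_le hLS r

theorem sum_card_filter_subset_le (r l : ℕ) (S : Finset V) :
    ∑ e ∈ (univ : Finset V).powersetCard r, {L ∈ S.powersetCard l | L ⊆ e}.card ≤
      S.card.choose l * (Fintype.card V - l).choose (r - l) := by
  have := sum_card_bipartiteAbove_eq_sum_card_bipartiteBelow (s := (univ : Finset V).powersetCard r)
    (t := S.powersetCard l) (fun e L => L ⊆ e)
  simp only [bipartiteAbove, bipartiteBelow] at this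
  rw [this, ← card_powersetCard]
  refine sum_le_card_nsmul _ _ _ fun L hL => ?_
  rw [← (mem_powersetCard.1 hL).2]
  exact card_filter_subset_powersetCard_le (subset_univ L) r

/-- Failure potential of the vertex set `S` when `j` greedy steps remain. -/
noncomputable def greedyPotential (l : ℕ) (T C a b : ℝ) (E : Finset (Finset V)) (j : ℕ)
    (S : Finset V) : ℝ :=
  open Classical in
  (if (∀ e ∈ E, ¬ e ⊆ S) ∧ ((coveredSubsets l E S).card : ℝ) ≤ T then a ^ j else 0) +
    Real.exp (((coveredSubsets l E S).card - T) / C) * b ^ j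

theorem exp_le_one_add_two_mul {x : ℝ} (h0 : 0 ≤ x) (h1 : x ≤ 1) : Real.exp x ≤ 1 + 2 * x := by
  have h := convexOn_exp.2 (Set.mem_univ (1 : ℝ)) (Set.mem_univ (0 : ℝ)) h0 (sub_nonneg.2 h1)
    (add_sub_cancel x 1)
  simp only [smul_eq_mul, mul_one, mul_zero, add_zero, Real.exp_zero] at h
  nlinarith [Real.exp_one_lt_d9]

theorem greedyPotential_nonneg {l : ℕ} {T C a b : ℝ} (ha : 0 ≤ a) (hb : 0 ≤ b)
    (E : Finset (Finset V)) (j : ℕ) (S : Finset V) : 0 ≤ greedyPotential l T C a b E j S := by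
  unfold greedyPotential
  split_ifs <;> positivity

theorem sum_exp_card_filter_le {r l : ℕ} (hlr : l ≤ r) (hrn : r ≤ Fintype.card V) (S : Finset V) :
    ∑ e ∈ (univ : Finset V).powersetCard r,
        Real.exp (({L ∈ S.powersetCard l | L ⊆ e}.card : ℝ) / r.choose l) ≤
      (Fintype.card V).choose r * (1 + 2 * (S.card.choose l / (Fintype.card V).choose l)) := by
  have hC : (0 : ℝ) < r.choose l := by exact_mod_cast Nat.choose_pos hlr
  have hN : (0 : ℝ) < (Fintype.card V).choose l := by
    exact_mod_cast Nat.choose_pos (hlr.trans hrn)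
  have hterm : ∀ e ∈ (univ : Finset V).powersetCard r,
      Real.exp (({L ∈ S.powersetCard l | L ⊆ e}.card : ℝ) / r.choose l) ≤
        1 + 2 * (({L ∈ S.powersetCard l | L ⊆ e}.card : ℝ) / r.choose l) := by
    intro e he
    refine exp_le_one_add_two_mul (by positivity) ((div_le_one hC).2 ?_)
    rw [← (mem_powersetCard.1 he).2, ← card_powersetCard]
    refine Nat.cast_le.2 (card_le_card fun L hL => ?_)
    obtain ⟨hLS, hLe⟩ := mem_filter.1 hL
    exact mem_powersetCard.2 ⟨hLe, (mem_powersetCard.1 hLS).2⟩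
  refine (sum_le_sum hterm).trans ?_
  rw [sum_add_distrib, ← mul_sum, ← sum_div]
  simp only [sum_const, card_powersetCard, card_univ, nsmul_eq_mul, mul_one]
  have h1 : (∑ e ∈ (univ : Finset V).powersetCard r, ({L ∈ S.powersetCard l | L ⊆ e}.card : ℝ)) ≤
      S.card.choose l * (Fintype.card V - l).choose (r - l) := by
    exact_mod_cast sum_card_filter_subset_le r l S
  have h2 : ((Fintype.card V).choose r : ℝ) * r.choose l =
      (Fintype.card V).choose l * (Fintype.card V - l).choose (r - l) := by
    exact_mod_cast Nat.choose_mul hlr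
  have h3 : (∑ e ∈ (univ : Finset V).powersetCard r,
      ({L ∈ S.powersetCard l | L ⊆ e}.card : ℝ)) / r.choose l ≤
        (Fintype.card V).choose r * (S.card.choose l / (Fintype.card V).choose l) := by
    rw [div_le_iff₀ hC]
    calc _ ≤ _ := h1
      _ = ((Fintype.card V).choose r * r.choose l : ℝ) *
          (S.card.choose l / (Fintype.card V).choose l) := by
        rw [h2]; field_simp
      _ = _ := by ring
  linarith

theorem card_filter_unhit_le {r l : ℕ} {T : ℝ} (hlr : l ≤ r) {S : Finset V} (hlS : l ≤ S.card)
    {E : Finset (Finset V)} (hT : ((coveredSubsets l E S).card : ℝ) ≤ T) :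
    ({e ∈ (univ : Finset V).powersetCard r | ∀ f ∈ greedyExtend l E e, ¬ f ⊆ S}.card : ℝ) ≤
      (Fintype.card V).choose r - S.card.choose r * (1 - T * r.choose l / S.card.choose l) := by
  have h1 : (S.card.choose r : ℝ) ≤
      {e ∈ (univ : Finset V).powersetCard r | ∃ f ∈ greedyExtend l E e, f ⊆ S}.card +
      (coveredSubsets l E S).card * (S.card - l).choose (r - l) := by
    exact_mod_cast choose_sub_le_card_filter_accepted r l E S
  have h2 : ({e ∈ (univ : Finset V).powersetCard r | ∃ f ∈ greedyExtend l E e, f ⊆ S}.card : ℝ) +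
      {e ∈ (univ : Finset V).powersetCard r | ∀ f ∈ greedyExtend l E e, ¬ f ⊆ S}.card =
        (Fintype.card V).choose r := by
    have := card_filter_add_card_filter_not (s := (univ : Finset V).powersetCard r)
      (fun e => ∃ f ∈ greedyExtend l E e, f ⊆ S)
    rw [card_powersetCard, card_univ] at this
    rw [← this]
    push Not
    push_cast
    rfl
  have h3 : (S.card.choose r : ℝ) * r.choose l =
      S.card.choose l * (S.card - l).choose (r - l) := by
    exact_mod_cast Nat.choose_mul hlr
  have hN : (0 : ℝ) < S.card.choose l := by exact_mod_cast Nat.choose_pos hlS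
  have h4 : (S.card.choose r : ℝ) * (T * r.choose l / S.card.choose l) =
      T * (S.card - l).choose (r - l) := by
    field_simp
    linear_combination T * h3
  have h5 := mul_le_mul_of_nonneg_right hT (Nat.cast_nonneg (α := ℝ) ((S.card - l).choose (r - l)))
  linarith

theorem sum_greedyPotential_le {r l : ℕ} {T : ℝ} (hlr : l ≤ r) (hrn : r ≤ Fintype.card V)
    {S : Finset V} (hlS : l ≤ S.card) {a b : ℝ} (ha : 0 ≤ a) (hb : 0 ≤ b)
    (ha' : 1 - S.card.choose r * (1 - T * r.choose l / S.card.choose l) /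
      (Fintype.card V).choose r ≤ a)
    (hb' : 1 + 2 * ((S.card.choose l : ℝ) / (Fintype.card V).choose l) ≤ b)
    (E : Finset (Finset V)) (j : ℕ) :
    ∑ e ∈ (univ : Finset V).powersetCard r,
        greedyPotential l T (r.choose l) a b (greedyExtend l E e) j S ≤
      (Fintype.card V).choose r * greedyPotential l T (r.choose l) a b E (j + 1) S := by
  classical
  have hN : (0 : ℝ) < (Fintype.card V).choose r := by exact_mod_cast Nat.choose_pos hrn
  unfold greedyPotential
  rw [sum_add_distrib, mul_add]
  refine add_le_add ?_ ?_
  · split_ifs with h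
    · calc _ ≤ ∑ e ∈ (univ : Finset V).powersetCard r,
            if ∀ f ∈ greedyExtend l E e, ¬ f ⊆ S then a ^ j else 0 := by
            refine sum_le_sum fun e _ => ?_
            split_ifs with h1 h2
            · exact le_rfl
            · exact absurd h1.1 h2
            · positivity
            · exact le_rfl
        _ = ({e ∈ (univ : Finset V).powersetCard r |
              ∀ f ∈ greedyExtend l E e, ¬ f ⊆ S}.card : ℝ) * a ^ j := by
            rw [← sum_filter, sum_const, nsmul_eq_mul]
        _ ≤ ((Fintype.card V).choose r * a) * a ^ j := by
            refine mul_le_mul_of_nonneg_right ?_ (by positivity)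
            refine (card_filter_unhit_le hlr hlS h.2).trans ?_
            calc _ = (Fintype.card V).choose r * (1 - S.card.choose r *
                  (1 - T * r.choose l / S.card.choose l) / (Fintype.card V).choose r) := by
                  field_simp
              _ ≤ _ := by gcongr
        _ = _ := by ring
    · rw [mul_zero]
      refine (sum_eq_zero fun e _ => if_neg fun h' => h ⟨?_, ?_⟩).le
      · exact fun f hf => h'.1 f (subset_greedyExtend l E e hf)
      · refine le_trans ?_ h'.2
        exact_mod_cast card_le_card (coveredSubsets_mono (subset_greedyExtend l E e) S)
  · calc _ ≤ ∑ e ∈ (univ : Finset V).powersetCard r,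
          Real.exp (((coveredSubsets l E S).card - T) / r.choose l) * b ^ j *
            Real.exp (({L ∈ S.powersetCard l | L ⊆ e}.card : ℝ) / r.choose l) := by
          refine sum_le_sum fun e _ => ?_
          rw [mul_right_comm, ← Real.exp_add, ← add_div]
          have : ((coveredSubsets l (greedyExtend l E e) S).card : ℝ) ≤
              (coveredSubsets l E S).card + {L ∈ S.powersetCard l | L ⊆ e}.card := by
            exact_mod_cast card_coveredSubsets_greedyExtend_le l E e S
          gcongr
          linarith
      _ ≤ Real.exp (((coveredSubsets l E S).card - T) / r.choose l) * b ^ j *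
            ((Fintype.card V).choose r * b) := by
          rw [← mul_sum]
          gcongr
          exact (sum_exp_card_filter_le hlr hrn S).trans (by gcongr)
      _ = _ := by ring

theorem exists_isRLSystem_forall_exists_subset {r l s m : ℕ} {T a b : ℝ} (hlr : l ≤ r)
    (hrn : r ≤ Fintype.card V) (hls : l ≤ s) (hT : 0 ≤ T) (ha : 0 ≤ a) (hb : 0 ≤ b)
    (ha' : 1 - s.choose r * (1 - T * r.choose l / s.choose l) / (Fintype.card V).choose r ≤ a)
    (hb' : 1 + 2 * ((s.choose l : ℝ) / (Fintype.card V).choose l) ≤ b)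
    (h : (Fintype.card V).choose s * (a ^ m + Real.exp (-T / r.choose l) * b ^ m) < 1) :
    ∃ E : Finset (Finset V), IsRLSystem r l E ∧ E.card ≤ m ∧
      ∀ S : Finset V, S.card = s → ∃ e ∈ E, e ⊆ S := by
  have key : ∀ i ≤ m, ∃ E : Finset (Finset V), IsRLSystem r l E ∧ E.card ≤ i ∧
      ∑ S ∈ (univ : Finset V).powersetCard s,
        greedyPotential l T (r.choose l) a b E (m - i) S < 1 := by
    intro i
    induction i with
    | zero =>
      refine fun _ => ⟨∅, ⟨by simp [IsRGraph], by simp⟩, by simp, lt_of_le_of_lt ?_ h⟩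
      simp [greedyPotential, coveredSubsets, hT, mul_add]
    | succ i ih =>
      intro hi
      obtain ⟨E, hE, hEc, hsum⟩ := ih (by omega)
      rw [show m - i = m - (i + 1) + 1 by omega] at hsum
      obtain ⟨e, he, hle⟩ : ∃ e ∈ (univ : Finset V).powersetCard r,
          ∑ S ∈ (univ : Finset V).powersetCard s,
            greedyPotential l T (r.choose l) a b (greedyExtend l E e) (m - (i + 1)) S ≤
          ∑ S ∈ (univ : Finset V).powersetCard s,
            greedyPotential l T (r.choose l) a b E (m - (i + 1) + 1) S := by
        refine exists_le_of_sum_le (powersetCard_nonempty.2 (by simpa using hrn)) ?_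
        rw [sum_comm, sum_const, card_powersetCard, card_univ, nsmul_eq_mul, mul_sum]
        refine sum_le_sum fun S hS => ?_
        obtain rfl := (mem_powersetCard.1 hS).2
        exact sum_greedyPotential_le hlr hrn hls ha hb ha' hb' E _
      exact ⟨greedyExtend l E e, hE.greedyExtend (mem_powersetCard.1 he).2,
        (card_greedyExtend_le l E e).trans (by omega), hle.trans_lt hsum⟩
  obtain ⟨E, hE, hEc, hsum⟩ := key m le_rfl
  refine ⟨E, hE, hEc, fun S hS => ?_⟩
  by_contra! hno
  have hS1 : greedyPotential l T (r.choose l) a b E (m - m) S < 1 :=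
    (single_le_sum (fun S _ => greedyPotential_nonneg ha hb E (m - m) S)
      (mem_powersetCard.2 ⟨subset_univ S, hS⟩)).trans_lt hsum
  refine hS1.not_ge ?_
  unfold greedyPotential
  simp only [Nat.sub_self, pow_zero, mul_one]
  split_ifs with hcov
  · exact le_add_of_nonneg_right (Real.exp_pos _).le
  · rw [zero_add, Real.one_le_exp_iff]
    have : T < (coveredSubsets l E S).card := not_le.1 fun hle => hcov ⟨hno, hle⟩
    exact div_nonneg (by linarith) (Nat.cast_nonneg _)

end

theorem not_hypColorable_of_forall_exists_subset {V : Type*} [Fintype V] {r s k : ℕ} (hr : 2 ≤ r) (hk : 0 < k)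
    {E : Finset (Finset V)} (hE : IsRGraph r E) (hks : k * s ≤ Fintype.card V)
    (h : ∀ S : Finset V, S.card = s → ∃ e ∈ E, e ⊆ S) : ¬ HypColorable E k := by
  rintro ⟨f, hf⟩
  have : Nonempty (Fin k) := ⟨⟨0, hk⟩⟩
  obtain ⟨c, hc⟩ := Fintype.exists_le_card_fiber_of_mul_le_card f (n := s) (by simpa using hks)
  obtain ⟨S, hSc, hS⟩ := Finset.exists_subset_card_eq hc
  obtain ⟨e, he, heS⟩ := h S hS
  obtain ⟨u, hu, v, hv, huv⟩ := hf e he (hr.trans (hE e he).ge)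
  have hcol : ∀ w ∈ e, f w = c := fun w hw => (Finset.mem_filter.1 (hSc (heS hw))).2
  exact huv ((hcol u hu).trans (hcol v hv).symm)

theorem pow_div_two_le_descFactorial {n j : ℕ} (h : 2 * j ^ 2 ≤ n) :
    (n : ℝ) ^ j / 2 ≤ n.descFactorial j := by
  rcases Nat.eq_zero_or_pos j with rfl | hj
  · norm_num
  have hjn : j ≤ n := by nlinarith
  have hn : (0 : ℝ) < n := by exact_mod_cast hj.trans_le hjn
  have hjn' : (j : ℝ) / n ≤ 1 := (div_le_one hn).2 (by exact_mod_cast hjn)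
  have h' : (2 : ℝ) * j ^ 2 ≤ n := by exact_mod_cast h
  have hbern : 1 + (j : ℝ) * (-(j / n)) ≤ (1 + -((j : ℝ) / n)) ^ j :=
    one_add_mul_le_pow (by linarith) j
  have hhalf : (1 : ℝ) / 2 ≤ 1 + j * (-(j / n)) := by
    have : (j : ℝ) * (j / n) ≤ 1 / 2 := by
      rw [← mul_div_assoc, div_le_iff₀ hn]
      linarith
    linarith
  calc (n : ℝ) ^ j / 2 = n ^ j * (1 / 2) := by ring
    _ ≤ n ^ j * (1 + -((j : ℝ) / n)) ^ j := by
      gcongr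
      exact hhalf.trans hbern
    _ = ((n : ℝ) - j) ^ j := by
      rw [← mul_pow]
      congr 1
      field_simp
      ring
    _ ≤ ((n + 1 - j : ℕ) : ℝ) ^ j := by
      rw [Nat.cast_sub (by omega)]
      push_cast
      have : (j : ℝ) ≤ n := by exact_mod_cast hjn
      gcongr
      linarith
    _ ≤ n.descFactorial j := by exact_mod_cast Nat.pow_sub_le_descFactorial n j

theorem cast_choose_eq_descFactorial_div (n j : ℕ) :
    (n.choose j : ℝ) = n.descFactorial j / j.factorial := by
  rw [Nat.descFactorial_eq_factorial_mul_choose, Nat.cast_mul,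
    mul_div_cancel_left₀ _ (by exact_mod_cast j.factorial_ne_zero)]

theorem half_div_pow_le_choose_div_choose {k s j : ℕ} (hk : 0 < k) (hs : 0 < s)
    (h : 2 * j ^ 2 ≤ s) :
    1 / (2 * (k : ℝ) ^ j) ≤ s.choose j / (k * s).choose j := by
  have hj : j ≤ k * s := by nlinarith [Nat.le_mul_of_pos_left s hk]
  have hpos : (0 : ℝ) < (k * s).descFactorial j := by
    exact_mod_cast Nat.pos_of_ne_zero fun h0 => hj.not_gt (Nat.descFactorial_eq_zero_iff_lt.1 h0)
  have hk' : (0 : ℝ) < k := by exact_mod_cast hk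
  have hup : ((k * s).descFactorial j : ℝ) ≤ k ^ j * s ^ j := by
    exact_mod_cast (Nat.descFactorial_le_pow (k * s) j).trans_eq (mul_pow k s j)
  have hlow := pow_div_two_le_descFactorial h
  rw [cast_choose_eq_descFactorial_div, cast_choose_eq_descFactorial_div,
    div_div_div_cancel_right₀ (by exact_mod_cast j.factorial_ne_zero), div_le_div_iff₀ (by positivity) hpos]
  calc _ ≤ (k : ℝ) ^ j * s ^ j := by linarith
    _ = s ^ j / 2 * (2 * k ^ j) := by ring
    _ ≤ _ := by gcongr

theorem choose_mul_le_exp {k s : ℕ} (hk : 1 ≤ Real.log k) :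
    ((k * s).choose s : ℝ) ≤ Real.exp (2 * (s * Real.log k)) := by
  have hk0 : (0 : ℝ) < k := by
    refine lt_of_le_of_ne (Nat.cast_nonneg k) fun h0 => ?_
    rw [← h0, Real.log_zero] at hk
    linarith
  calc ((k * s).choose s : ℝ) ≤ ((k * s : ℕ) : ℝ) ^ s / s.factorial := Nat.choose_le_pow_div s _
    _ = (k : ℝ) ^ s * ((s : ℝ) ^ s / s.factorial) := by push_cast; ring
    _ ≤ Real.exp (s * Real.log k) * Real.exp s := by
      gcongr
      · rw [Real.exp_nat_mul, Real.exp_log hk0]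
      · exact Real.pow_div_factorial_le_exp s (Nat.cast_nonneg s) s
    _ ≤ _ := by
      rw [← Real.exp_add]
      gcongr
      nlinarith [Nat.cast_nonneg (α := ℝ) s]

theorem exists_isRLSystem_not_hypColorable {r l k s m : ℕ} (hl : 2 ≤ l) (hlr : l < r)
    (hk : 1 ≤ Real.log k) (hs : 2 * r ^ 2 ≤ s)
    (hm : 9 * ((k * s : ℕ) * ((k : ℝ) ^ (r - 1) * Real.log k)) ≤ m)
    (hm' : 100 * ((r.descFactorial l : ℝ) ^ 2 / l.factorial) * m ≤ ((k * s : ℕ) : ℝ) ^ l) :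
    ∃ E : Finset (Finset (Fin (k * s))), IsRLSystem r l E ∧ ¬ HypColorable E k ∧ E.card ≤ m := by
  have hk0 : 0 < k := by
    refine Nat.pos_of_ne_zero fun h0 => ?_
    rw [h0, Nat.cast_zero, Real.log_zero] at hk
    linarith
  have hrs : r ≤ s := by nlinarith
  have hs0 : 0 < s := by omega
  have hsn : s ≤ k * s := Nat.le_mul_of_pos_left s hk0
  have hl2 : 2 * l ^ 2 ≤ s := le_trans (by gcongr) hs
  have hk1 : (1 : ℝ) ≤ k := by exact_mod_cast hk0
  have hs1 : (1 : ℝ) ≤ s := by exact_mod_cast hs0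
  set n := k * s with hn
  set x : ℝ := 1 / (k : ℝ) ^ r with hx
  set ρ : ℝ := s.choose l / n.choose l with hρ
  have hx0 : 0 < x := by positivity
  have hx1 : x ≤ 1 := by
    rw [hx, div_le_one (by positivity)]
    exact one_le_pow₀ hk1
  have hCr : (0 : ℝ) < r.choose l := by exact_mod_cast Nat.choose_pos hlr.le
  have hCs : (0 : ℝ) < s.choose l := by exact_mod_cast Nat.choose_pos (hlr.le.trans hrs)
  have hCn : (0 : ℝ) < n.choose l := by
    exact_mod_cast Nat.choose_pos (hlr.le.trans (hrs.trans hsn))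
  have hρx : x / 2 ≤ ρ := by
    refine le_trans ?_ (half_div_pow_le_choose_div_choose hk0 hs0 hl2)
    rw [hx, div_div, mul_comm]
    gcongr
  have hrx : x / 2 ≤ s.choose r / n.choose r := by
    refine le_trans (le_of_eq ?_) (half_div_pow_le_choose_div_choose hk0 hs0 hs)
    rw [hx, div_div, mul_comm]
  have hT : 10 * m * r.choose l * ρ * r.choose l / s.choose l ≤ 1 / 5 := by
    have hlow : (n : ℝ) ^ l / 2 / l.factorial ≤ n.choose l := by
      rw [cast_choose_eq_descFactorial_div]
      gcongr
      exact pow_div_two_le_descFactorial (hl2.trans hsn)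
    have hfac : (0 : ℝ) < l.factorial := by positivity
    have heq : 10 * m * r.choose l * ρ * r.choose l / s.choose l =
        10 * m * (r.choose l : ℝ) ^ 2 / n.choose l := by
      rw [hρ]
      field_simp
    rw [heq, div_le_iff₀ hCn]
    refine le_trans ?_ (mul_le_mul_of_nonneg_left hlow (by norm_num))
    rw [cast_choose_eq_descFactorial_div]
    calc _ = 100 * ((r.descFactorial l : ℝ) ^ 2 / l.factorial) * m * (1 / 10 / l.factorial) := by
          field_simp; ring
      _ ≤ (n : ℝ) ^ l * (1 / 10 / l.factorial) := by gcongr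
      _ = _ := by ring
  have hmx : 9 * (s * Real.log k) ≤ m * x := by
    rw [hx, mul_one_div, le_div_iff₀ (by positivity)]
    refine le_trans (le_of_eq ?_) hm
    rw [hn, ← Nat.sub_add_cancel (show 1 ≤ r by omega), pow_succ, Nat.add_sub_cancel]
    push_cast
    ring
  obtain ⟨E, hE, hEc, hES⟩ := exists_isRLSystem_forall_exists_subset (V := Fin n) (r := r) (l := l)
    (s := s) (m := m) (T := 10 * m * r.choose l * ρ) (a := 1 - 2 / 5 * x) (b := 1 + 2 * ρ) hlr.le
    (by simpa using hrs.trans hsn) (hlr.le.trans hrs) (by positivity) (by linarith) (by positivity)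
    (by
      rw [Fintype.card_fin, mul_div_right_comm]
      nlinarith)
    (by rw [Fintype.card_fin])
    (by
      rw [Fintype.card_fin]
      have h1 : (1 - 2 / 5 * x) ^ m ≤ Real.exp (-(2 / 5 * (m * x))) := by
        calc _ ≤ Real.exp (-(2 / 5 * x)) ^ m := by
              gcongr
              · linarith
              · exact Real.one_sub_le_exp_neg _
          _ = _ := by rw [← Real.exp_nat_mul]; ring_nf
      have h2 : Real.exp (-(10 * m * r.choose l * ρ) / r.choose l) * (1 + 2 * ρ) ^ m ≤
          Real.exp (-(2 / 5 * (m * x))) := by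
        calc _ ≤ Real.exp (-(10 * m * r.choose l * ρ) / r.choose l) * Real.exp (2 * ρ) ^ m := by
              gcongr
              rw [add_comm]
              exact Real.add_one_le_exp _
          _ = Real.exp (-(8 * (m * ρ))) := by
              rw [← Real.exp_nat_mul, ← Real.exp_add]
              congr 1
              field_simp
              ring
          _ ≤ _ := by
              refine Real.exp_le_exp.2 ?_
              nlinarith [mul_le_mul_of_nonneg_left hρx (Nat.cast_nonneg (α := ℝ) m),
                mul_nonneg (Nat.cast_nonneg (α := ℝ) m) hx0.le]
      have hsL : 1 ≤ s * Real.log k := by nlinarith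
      have h3 : Real.exp (-(2 / 5 * (m * x))) ≤
          Real.exp (-(2 * (s * Real.log k))) * Real.exp (-1) := by
        rw [← Real.exp_add]
        gcongr
        linarith
      calc _ ≤ Real.exp (2 * (s * Real.log k)) *
            (Real.exp (-(2 * (s * Real.log k))) * Real.exp (-1) +
              Real.exp (-(2 * (s * Real.log k))) * Real.exp (-1)) :=
            mul_le_mul (choose_mul_le_exp hk) (add_le_add (h1.trans h3) (h2.trans h3))
              (add_nonneg (pow_nonneg (by linarith) _) (by positivity)) (by positivity)
        _ = 2 * Real.exp (-1) := by
            rw [Real.exp_neg (2 * (s * Real.log k))]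
            field_simp
            ring
        _ < 1 := by
            have := Real.exp_neg_one_lt_d9
            linarith)
  exact ⟨E, hE, not_hypColorable_of_forall_exists_subset (hl.trans hlr.le) hk0 hE.1 (by simp [hn])
    hES, hEc⟩

/-- **Theorem.** Fix `2 ≤ l < r`. For all sufficiently large `k` there exists an
`(r,l)`-system with chromatic number greater than `k` and fewer than
`c_{r,l} (k^(r-1) log k)^(l/(l-1))` edges, where
`c_{r,l} = 2 (100 (r)_l² / l!)^(1/(l-1)) (10(r-1)/(l-1))^(l/(l-1))`
and `(r)_l` is the falling factorial. -/
theorem rl_system_upper_bound (r l : ℕ) (hl : 2 ≤ l) (hlr : l < r) :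
    ∃ k₀ : ℕ, ∀ k : ℕ, k₀ ≤ k →
      ∃ (n : ℕ) (E : Finset (Finset (Fin n))),
        IsRLSystem r l E ∧ ¬ HypColorable E k ∧
        (E.card : ℝ) <
          (2 * (100 * (r.descFactorial l : ℝ) ^ 2 / (l.factorial : ℝ)) ^ (1 / ((l : ℝ) - 1)) *
            (10 * ((r : ℝ) - 1) / ((l : ℝ) - 1)) ^ ((l : ℝ) / ((l : ℝ) - 1))) *
          ((k : ℝ) ^ (r - 1) * Real.log k) ^ ((l : ℝ) / ((l : ℝ) - 1)) := by
  obtain ⟨k₀, hk₀⟩ := Filter.eventually_atTop.1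
    ((Real.tendsto_log_atTop.comp tendsto_natCast_atTop_atTop).eventually_ge_atTop
      (((2 * r ^ 2 : ℕ) : ℝ) ^ (l - 1)))
  refine ⟨k₀, fun k hk => ?_⟩
  have hlog : ((2 * r ^ 2 : ℕ) : ℝ) ^ (l - 1) ≤ Real.log k := hk₀ k hk
  have hM : (1 : ℝ) ≤ (2 * r ^ 2 : ℕ) := by
    exact_mod_cast (show 1 ≤ 2 * r ^ 2 by nlinarith)
  have hlog1 : 1 ≤ Real.log k := (one_le_pow₀ hM).trans hlog
  have hk0 : 0 < k := by
    refine Nat.pos_of_ne_zero fun h0 => ?_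
    rw [h0, Nat.cast_zero, Real.log_zero] at hlog1
    linarith
  have hk1 : (1 : ℝ) ≤ k := by exact_mod_cast hk0
  have hl' : (2 : ℝ) ≤ l := by exact_mod_cast hl
  have hα : 0 < (l : ℝ) - 1 := by linarith
  have hlr' : (l : ℝ) < r := by exact_mod_cast hlr
  have hB : 1 ≤ (r.descFactorial l : ℝ) ^ 2 / l.factorial := by
    rw [one_le_div (by positivity), Nat.descFactorial_eq_factorial_mul_choose]
    have h1 := l.factorial_pos
    have h2 := Nat.choose_pos hlr.le
    exact_mod_cast (show l.factorial ≤ (l.factorial * r.choose l) ^ 2 by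
      calc l.factorial ≤ l.factorial * r.choose l := Nat.le_mul_of_pos_right _ h2
        _ ≤ _ := Nat.le_self_pow two_ne_zero _)
  have hD : 10 ≤ 10 * ((r : ℝ) - 1) / ((l : ℝ) - 1) := by
    rw [le_div_iff₀ hα]
    linarith
  rw [mul_div_assoc (100 : ℝ)]
  set B : ℝ := (r.descFactorial l : ℝ) ^ 2 / l.factorial
  set D : ℝ := 10 * ((r : ℝ) - 1) / ((l : ℝ) - 1)
  set K : ℝ := (k : ℝ) ^ (r - 1) * Real.log k with hK
  have hK1 : 1 ≤ K := one_le_mul_of_one_le_of_one_le (one_le_pow₀ hk1) hlog1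
  set y : ℝ := (100 * B * (D * K)) ^ (1 / ((l : ℝ) - 1)) with hy
  have hDK : 1 ≤ D * K := one_le_mul_of_one_le_of_one_le (by linarith) hK1
  have hy0 : 0 ≤ y := by positivity
  have hypow : y ^ (l - 1) = 100 * B * (D * K) := by
    rw [hy, ← Real.rpow_natCast, ← Real.rpow_mul (by positivity),
      Nat.cast_sub (by omega), Nat.cast_one, one_div_mul_cancel hα.ne', Real.rpow_one]
  have htarget : 2 * (100 * B) ^ (1 / ((l : ℝ) - 1)) * D ^ ((l : ℝ) / ((l : ℝ) - 1)) *
      K ^ ((l : ℝ) / ((l : ℝ) - 1)) = 2 * y * (D * K) := by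
    rw [mul_assoc, ← Real.mul_rpow (by positivity) (by positivity),
      show (l : ℝ) / ((l : ℝ) - 1) = 1 / ((l : ℝ) - 1) + 1 by field_simp; ring,
      Real.rpow_add (by positivity), Real.rpow_one, hy,
      Real.mul_rpow (x := 100 * B) (by positivity) (by positivity)]
    ring
  have hMy : ((2 * r ^ 2 : ℕ) : ℝ) * k ≤ y := by
    rw [← pow_le_pow_iff_left₀ (by positivity) hy0 (show l - 1 ≠ 0 by omega), hypow, mul_pow]
    calc _ ≤ Real.log k * (k : ℝ) ^ (r - 1) := by
          gcongr
      _ = K := mul_comm _ _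
      _ ≤ _ := by nlinarith
  have hk0' : (0 : ℝ) < k := by linarith
  set s : ℕ := ⌈y / k⌉₊
  have hys : y ≤ (k * s : ℕ) := by
    push_cast
    exact (div_le_iff₀' hk0').1 (Nat.le_ceil _)
  have hsy : ((k * s : ℕ) : ℝ) < 2 * y := by
    have h := (lt_div_iff₀' hk0').1
      (sub_lt_iff_lt_add.2 (Nat.ceil_lt_add_one (div_nonneg hy0 hk0'.le)))
    push_cast
    nlinarith
  have hs : 2 * r ^ 2 ≤ s := by
    exact_mod_cast ((le_div_iff₀ hk0').2 hMy).trans (Nat.le_ceil _)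
  have hn1 : (1 : ℝ) ≤ (k * s : ℕ) := by nlinarith
  set m : ℕ := ⌊D * ((k * s : ℕ) * K)⌋₊
  have hnK : 1 ≤ ((k * s : ℕ) : ℝ) * K := one_le_mul_of_one_le_of_one_le hn1 hK1
  have hmle : (m : ℝ) ≤ D * ((k * s : ℕ) * K) := Nat.floor_le (by positivity)
  obtain ⟨E, hE, hcol, hEm⟩ := exists_isRLSystem_not_hypColorable (m := m) hl hlr hlog1 hs
    (by
      have := Nat.lt_floor_add_one (D * (((k * s : ℕ) : ℝ) * K))
      nlinarith)
    (by
      calc 100 * B * m ≤ 100 * B * (D * ((k * s : ℕ) * K)) := by gcongr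
        _ = y ^ (l - 1) * (k * s : ℕ) := by rw [hypow]; ring
        _ ≤ ((k * s : ℕ) : ℝ) ^ (l - 1) * (k * s : ℕ) := by gcongr
        _ = _ := by rw [← pow_succ, Nat.sub_add_cancel (by omega)])
  refine ⟨k * s, E, hE, hcol, ?_⟩
  rw [htarget]
  calc (E.card : ℝ) ≤ m := by exact_mod_cast hEm
    _ ≤ D * ((k * s : ℕ) * K) := hmle
    _ = (k * s : ℕ) * (D * K) := by ring
    _ < _ := by gcongr
end

section
/- Fix r ≥ 3. For all sufficiently large k, m_k(F_r) < c_𝓘 · k^{r+1/(r−1)} · (log k)^{1 + r/(r−1)^2}, where c_𝓘 = ( r! · (50·r!·(r+1)/((r−1)!)^2)^{1/r} )^{1/(r−3/2)} · (10(r−1)/(r−3/2))^{(r−1/2)/(r−3/2)}. That is, there exists an r-graph with independent neighborhoods, chromatic number greater than k, and fewer than c_𝓘 k^{r+1/(r−1)} (log k)^{1+r/(r−1)^2} edges. -/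
/-- The `r`-graph `E` contains a copy of `F_r`: there are disjoint sets `A` (of size `r-1`)
and `B` (of size `r`) such that `B` is an edge and `A ∪ {b}` is an edge for every `b ∈ B`. -/
def HasFr (r : ℕ) {V : Type*} [DecidableEq V] (E : Finset (Finset V)) : Prop :=
  ∃ A B : Finset V, Disjoint A B ∧ A.card = r - 1 ∧ B.card = r ∧
    B ∈ E ∧ ∀ b ∈ B, insert b A ∈ E

/-- The edges of the copy of `F_r` given by the pair `(A, B)`. -/
def frEdges {V : Type*} [DecidableEq V] (x : Finset V × Finset V) : Finset (Finset V) :=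
  insert x.2 (x.2.image fun b => insert b x.1)

/-- The pairs `(A, B)` that span a copy of `F_r`. -/
def frPairs (r : ℕ) (V : Type*) [Fintype V] [DecidableEq V] : Finset (Finset V × Finset V) :=
  {x ∈ Finset.powersetCard (r - 1) Finset.univ ×ˢ Finset.powersetCard r Finset.univ |
    Disjoint x.1 x.2}

/-- The pairs `(A, B)` that span a copy of `F_r` with at least one edge inside `S`. -/
def frPairsTouching (r : ℕ) {V : Type*} [Fintype V] [DecidableEq V] (S : Finset V) :
    Finset (Finset V × Finset V) :=
  {x ∈ frPairs r V | ∃ e ∈ frEdges x, e ⊆ S}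

section Copies

variable {V : Type*} [DecidableEq V]

lemma mem_frPairs [Fintype V] {r : ℕ} {x : Finset V × Finset V} :
    x ∈ frPairs r V ↔ x.1.card = r - 1 ∧ x.2.card = r ∧ Disjoint x.1 x.2 := by
  simp [frPairs, and_assoc]

lemma card_frEdges [Fintype V] {r : ℕ} (hr : 2 ≤ r) {x : Finset V × Finset V}
    (hx : x ∈ frPairs r V) : (frEdges x).card = r + 1 := by
  obtain ⟨hA, hB, hAB⟩ := mem_frPairs.1 hx
  rw [frEdges, Finset.card_insert_of_notMem, Finset.card_image_of_injOn, hB]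
  · intro b hb c hc hbc
    have hbA : b ∉ x.1 := fun h => Finset.disjoint_left.1 hAB h hb
    have : b ∈ insert c x.1 := by
      rw [← show insert b x.1 = insert c x.1 from hbc]
      exact Finset.mem_insert_self _ _
    rcases Finset.mem_insert.1 this with h | h
    · exact h
    · exact absurd h hbA
  · intro h
    obtain ⟨b, -, hb⟩ := Finset.mem_image.1 h
    obtain ⟨a, ha⟩ := Finset.card_pos.1 (show 0 < x.1.card by omega)
    exact Finset.disjoint_left.1 hAB ha (hb ▸ Finset.mem_insert_of_mem ha)

lemma card_frPairsTouching_le [Fintype V] {r : ℕ} (hr : 2 ≤ r) (S : Finset V) :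
    (frPairsTouching r S).card ≤
      (r + 1) * S.card.choose r * (Fintype.card V).choose (r - 1) := by
  set P := Finset.powersetCard r S with hP
  set R := Finset.powersetCard (r - 1) (Finset.univ : Finset V) with hR
  have hsub : frPairsTouching r S ⊆ (R ×ˢ P) ∪
      P.biUnion fun e => (e ×ˢ R).image fun y => (e.erase y.1, insert y.1 y.2) := by
    intro x hx
    obtain ⟨hx, e, he, heS⟩ := Finset.mem_filter.1 hx
    obtain ⟨hA, hB, hAB⟩ := mem_frPairs.1 hx
    rcases Finset.mem_insert.1 he with rfl | he
    · refine Finset.mem_union_left _ (Finset.mem_product.2 ⟨?_, ?_⟩)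
      · simp [hR, hA]
      · simp [hP, hB, heS]
    · obtain ⟨b, hb, rfl⟩ := Finset.mem_image.1 he
      have hbA : b ∉ x.1 := fun h => Finset.disjoint_left.1 hAB h hb
      refine Finset.mem_union_right _ (Finset.mem_biUnion.2 ⟨insert b x.1, ?_, ?_⟩)
      · refine Finset.mem_powersetCard.2 ⟨heS, ?_⟩
        rw [Finset.card_insert_of_notMem hbA]
        omega
      · refine Finset.mem_image.2 ⟨(b, x.2.erase b), ?_, ?_⟩
        · simp [hR, Finset.card_erase_of_mem hb, hB]
        · simp [Finset.erase_insert hbA, Finset.insert_erase hb]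
  have hPc : P.card = S.card.choose r := by simp [hP]
  have hRc : R.card = (Fintype.card V).choose (r - 1) := by simp [hR]
  calc (frPairsTouching r S).card ≤ _ := Finset.card_le_card hsub
    _ ≤ R.card * P.card + P.card * (r * R.card) := by
      refine (Finset.card_union_le _ _).trans (add_le_add (Finset.card_product _ _).le ?_)
      refine Finset.card_biUnion_le_card_mul _ _ _ fun e he => ?_
      refine Finset.card_image_le.trans ?_
      rw [Finset.card_product, (Finset.mem_powersetCard.1 he).2]
    _ = _ := by rw [hPc, hRc]; ring

/-- Deleting the edges of a maximal edge-disjoint family of copies of `F_r` destroys all copies.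
If every edge in some set `S` is deleted then the members of the family with an edge in `S`
cover all edges in `S`. -/
lemma exists_frFree_subset [Fintype V] (r : ℕ) (E : Finset (Finset V)) :
    ∃ E' ⊆ E, ¬ HasFr r E' ∧ ∀ S : Finset V, (∀ e ∈ E', ¬ e ⊆ S) →
      ∃ T ⊆ frPairsTouching r S, (T : Set (Finset V × Finset V)).PairwiseDisjoint frEdges ∧
        T.biUnion frEdges ⊆ E ∧ ∀ e ∈ E, e ⊆ S → e ∈ T.biUnion frEdges := by
  classical
  set 𝒯 : Finset (Finset (Finset V × Finset V)) :=
    {T ∈ (frPairs r V).powerset | (T : Set (Finset V × Finset V)).PairwiseDisjoint frEdges ∧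
      T.biUnion frEdges ⊆ E} with h𝒯
  have hne : 𝒯.Nonempty := ⟨∅, by simp [h𝒯]⟩
  obtain ⟨T, hT, hmax⟩ := Finset.exists_max_image 𝒯 Finset.card hne
  obtain ⟨hTX, hTd, hTE⟩ : T ⊆ frPairs r V ∧
      (T : Set (Finset V × Finset V)).PairwiseDisjoint frEdges ∧ T.biUnion frEdges ⊆ E := by
    simpa [h𝒯] using hT
  refine ⟨E \ T.biUnion frEdges, Finset.sdiff_subset, ?_, ?_⟩
  · rintro ⟨A, B, hAB, hA, hB, hBE, hE⟩
    have hsub : frEdges (A, B) ⊆ E \ T.biUnion frEdges := by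
      intro e he
      rcases Finset.mem_insert.1 he with rfl | he
      · exact hBE
      · obtain ⟨b, hb, rfl⟩ := Finset.mem_image.1 he
        exact hE b hb
    have hdisj : ∀ y ∈ T, Disjoint (frEdges (A, B)) (frEdges y) := fun y hy =>
      (Finset.subset_sdiff.1 hsub).2.mono_right (Finset.subset_biUnion_of_mem frEdges hy)
    have hnot : (A, B) ∉ T := fun h => by
      have := (hdisj _ h)
      rw [disjoint_self] at this
      exact Finset.insert_ne_empty _ _ this
    have hins : insert (A, B) T ∈ 𝒯 := by
      simp only [h𝒯, Finset.mem_filter, Finset.mem_powerset]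
      refine ⟨Finset.insert_subset (mem_frPairs.2 ⟨hA, hB, hAB⟩) hTX, ?_, ?_⟩
      · rw [Finset.coe_insert, Set.pairwiseDisjoint_insert]
        exact ⟨hTd, fun y hy _ => hdisj y hy⟩
      · rw [Finset.biUnion_insert]
        exact Finset.union_subset (hsub.trans Finset.sdiff_subset) hTE
    have := hmax _ hins
    rw [Finset.card_insert_of_notMem hnot] at this
    omega
  · intro S hS
    refine ⟨{x ∈ T | ∃ e ∈ frEdges x, e ⊆ S}, ?_, ?_, ?_, ?_⟩
    · exact Finset.filter_subset_filter _ hTX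
    · exact hTd.subset (Finset.coe_subset.2 (Finset.filter_subset _ _))
    · exact (Finset.biUnion_subset_biUnion_of_subset_left _ (Finset.filter_subset _ _)).trans hTE
    · intro e he heS
      have : e ∈ T.biUnion frEdges := by
        by_contra h
        exact hS e (Finset.mem_sdiff.2 ⟨he, h⟩) heS
      obtain ⟨x, hx, hex⟩ := Finset.mem_biUnion.1 this
      exact Finset.mem_biUnion.2 ⟨x, Finset.mem_filter.2 ⟨hx, e, hex, heS⟩, hex⟩

end Copies

lemma sum_pow_card_powerset {α : Type*} (P : Finset α) (q : ℝ) :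
    ∑ E ∈ P.powerset, q ^ E.card = (1 + q) ^ P.card := by
  have := Finset.sum_pow_mul_eq_add_pow q 1 P
  simpa [add_comm] using this

section Weights

variable {α : Type*} [DecidableEq α]

lemma sum_biUnion_le_sum_sum_s2 {ι : Type*} (s : Finset ι) (t : ι → Finset α) {f : α → ℝ}
    (hf : ∀ a, 0 ≤ f a) : ∑ a ∈ s.biUnion t, f a ≤ ∑ i ∈ s, ∑ a ∈ t i, f a := by
  classical
  induction s using Finset.induction_on with
  | empty => simp
  | insert i s hi ih =>
    rw [Finset.biUnion_insert, Finset.sum_insert hi]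
    have h := Finset.sum_union_inter (s₁ := t i) (s₂ := s.biUnion t) (f := f)
    have : 0 ≤ ∑ a ∈ t i ∩ s.biUnion t, f a := Finset.sum_nonneg fun a _ => hf a
    linarith

/-- The total weight of the subsets of `P` that contain `U` and avoid `W`. -/
lemma sum_pow_card_filter_le {P U W : Finset α} {q : ℝ} (hq : 0 ≤ q) :
    ∑ E ∈ P.powerset with U ⊆ E ∧ Disjoint E W, q ^ E.card ≤
      q ^ U.card * (1 + q) ^ (P \ (U ∪ W)).card := by
  rw [← sum_pow_card_powerset, Finset.mul_sum]
  have hinj : Set.InjOn (fun E => E \ U)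
      ({E ∈ P.powerset | U ⊆ E ∧ Disjoint E W} : Finset (Finset α)) := by
    intro E hE F hF h
    have hE := (Finset.mem_filter.1 hE).2.1
    have hF := (Finset.mem_filter.1 hF).2.1
    rw [← Finset.sdiff_union_of_subset hE, ← Finset.sdiff_union_of_subset hF]
    exact congrArg (· ∪ U) h
  have heq : ∀ E ∈ ({E ∈ P.powerset | U ⊆ E ∧ Disjoint E W} : Finset (Finset α)),
      q ^ E.card = q ^ U.card * q ^ (E \ U).card := by
    intro E hE
    have hE := (Finset.mem_filter.1 hE).2.1
    rw [← pow_add, add_comm, Finset.card_sdiff_add_card_eq_card hE]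
  rw [Finset.sum_congr rfl heq, ← Finset.sum_image (f := fun D => q ^ U.card * q ^ D.card) hinj]
  refine Finset.sum_le_sum_of_subset_of_nonneg ?_ fun _ _ _ => by positivity
  intro D hD
  obtain ⟨E, hE, rfl⟩ := Finset.mem_image.1 hD
  obtain ⟨hEP, -, hEW⟩ := Finset.mem_filter.1 hE
  rw [Finset.mem_powerset] at hEP ⊢
  intro a ha
  obtain ⟨haE, haU⟩ := Finset.mem_sdiff.1 ha
  refine Finset.mem_sdiff.2 ⟨hEP haE, fun h => ?_⟩
  rcases Finset.mem_union.1 h with h | h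
  · exact haU h
  · exact Finset.disjoint_left.1 hEW haE h

lemma sum_card_mul_pow_card_le (P : Finset α) {q : ℝ} (hq : 0 ≤ q) :
    ∑ E ∈ P.powerset, (E.card : ℝ) * q ^ E.card ≤ P.card * q * (1 + q) ^ P.card := by
  have hswap : ∑ E ∈ P.powerset, (E.card : ℝ) * q ^ E.card =
      ∑ e ∈ P, ∑ E ∈ P.powerset with {e} ⊆ E ∧ Disjoint E ∅, q ^ E.card := by
    simp_rw [Finset.sum_filter]
    rw [Finset.sum_comm]
    refine Finset.sum_congr rfl fun E hE => ?_
    rw [← Finset.sum_filter, Finset.sum_const, nsmul_eq_mul]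
    congr 3
    ext e
    simpa using fun h => Finset.mem_powerset.1 hE h
  rw [hswap, mul_assoc, ← nsmul_eq_mul]
  refine Finset.sum_le_card_nsmul _ _ _ fun e _ => (sum_pow_card_filter_le hq).trans ?_
  rw [Finset.card_singleton, pow_one]
  gcongr
  · linarith
  · exact Finset.sdiff_subset

end Weights

/-- The total weight of the `r`-graphs in which some edge-disjoint family of copies of `F_r`
covers all the edges in `S`. -/
lemma sum_pow_card_covered_le {V : Type*} [Fintype V] [DecidableEq V] {r : ℕ} (hr : 2 ≤ r)
    {q : ℝ} (hq : 0 ≤ q) (S : Finset V) (𝓑 : Finset (Finset (Finset V)))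
    (h𝓑 : ∀ E ∈ 𝓑, E ⊆ Finset.powersetCard r Finset.univ ∧ ∃ T ⊆ frPairsTouching r S,
      (T : Set (Finset V × Finset V)).PairwiseDisjoint frEdges ∧ T.biUnion frEdges ⊆ E ∧
        ∀ e ∈ E, e ⊆ S → e ∈ T.biUnion frEdges) :
    (∑ E ∈ 𝓑, q ^ E.card) * (1 + q) ^ (S.card.choose r) ≤
      Real.exp (q ^ (r + 1) *
        ((r + 1) * S.card.choose r * (Fintype.card V).choose (r - 1) : ℕ)) *
        (1 + q) ^ ((Fintype.card V).choose r) := by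
  classical
  set P := Finset.powersetCard r (Finset.univ : Finset V) with hP
  set PS := Finset.powersetCard r S with hPS
  set X := frPairsTouching r S with hX
  have hPc : P.card = (Fintype.card V).choose r := by simp [hP]
  have hPSc : PS.card = S.card.choose r := by simp [hPS]
  have hPSP : PS ⊆ P := Finset.powersetCard_mono (Finset.subset_univ S)
  set 𝒯 : Finset (Finset (Finset V × Finset V)) :=
    {T ∈ X.powerset | (T : Set (Finset V × Finset V)).PairwiseDisjoint frEdges} with h𝒯
  have hcov : 𝓑 ⊆ 𝒯.biUnion fun T => {E ∈ P.powerset | T.biUnion frEdges ⊆ E ∧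
      Disjoint E (PS \ T.biUnion frEdges)} := by
    intro E hE
    obtain ⟨hEP, T, hTX, hTd, hTE, hc⟩ := h𝓑 E hE
    refine Finset.mem_biUnion.2 ⟨T, by simp [h𝒯, hTX, hTd], ?_⟩
    refine Finset.mem_filter.2 ⟨Finset.mem_powerset.2 hEP, hTE, ?_⟩
    refine Finset.disjoint_left.2 fun e he h => ?_
    obtain ⟨h1, h2⟩ := Finset.mem_sdiff.1 h
    exact h2 (hc e he (Finset.mem_powersetCard.1 h1).1)
  have hterm : ∀ T ∈ 𝒯, (∑ E ∈ P.powerset with T.biUnion frEdges ⊆ E ∧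
      Disjoint E (PS \ T.biUnion frEdges), q ^ E.card) * (1 + q) ^ PS.card ≤
      (q ^ (r + 1)) ^ T.card * (1 + q) ^ P.card := by
    intro T hT
    obtain ⟨hTX, hTd⟩ := Finset.mem_filter.1 hT
    rw [Finset.mem_powerset] at hTX
    have hcard : (T.biUnion frEdges).card = (r + 1) * T.card := by
      rw [Finset.card_biUnion hTd, Finset.sum_const_nat (m := r + 1), mul_comm]
      exact fun x hx => card_frEdges hr (Finset.mem_filter.1 (hTX hx)).1
    calc _ ≤ q ^ (T.biUnion frEdges).card *
          (1 + q) ^ (P \ (T.biUnion frEdges ∪ PS \ T.biUnion frEdges)).card *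
          (1 + q) ^ PS.card := by
          gcongr
          exact sum_pow_card_filter_le hq
      _ ≤ _ := by
          rw [hcard, pow_mul, mul_assoc, ← pow_add]
          gcongr
          · linarith
          · rw [Finset.union_sdiff_self_eq_union, ← Finset.card_sdiff_add_card_eq_card hPSP]
            gcongr
            exact Finset.subset_union_right
  rw [← hPc, ← hPSc]
  calc (∑ E ∈ 𝓑, q ^ E.card) * (1 + q) ^ PS.card
      ≤ (∑ T ∈ 𝒯, ∑ E ∈ P.powerset with T.biUnion frEdges ⊆ E ∧
        Disjoint E (PS \ T.biUnion frEdges), q ^ E.card) * (1 + q) ^ PS.card := by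
        gcongr
        refine (Finset.sum_le_sum_of_subset_of_nonneg hcov fun _ _ _ => by positivity).trans ?_
        exact sum_biUnion_le_sum_sum_s2 _ _ fun _ => by positivity
    _ ≤ ∑ T ∈ 𝒯, (q ^ (r + 1)) ^ T.card * (1 + q) ^ P.card := by
        rw [Finset.sum_mul]
        exact Finset.sum_le_sum hterm
    _ ≤ (1 + q ^ (r + 1)) ^ X.card * (1 + q) ^ P.card := by
        rw [← Finset.sum_mul, ← sum_pow_card_powerset X]
        refine mul_le_mul_of_nonneg_right ?_ (by positivity)
        exact Finset.sum_le_sum_of_subset_of_nonneg (Finset.filter_subset _ _)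
          fun _ _ _ => by positivity
    _ ≤ _ := by
        gcongr
        calc (1 + q ^ (r + 1)) ^ X.card ≤ Real.exp (q ^ (r + 1)) ^ X.card := by
              gcongr
              rw [add_comm]
              exact Real.add_one_le_exp _
          _ = Real.exp (q ^ (r + 1) * X.card) := by rw [← Real.exp_nat_mul, mul_comm]
          _ ≤ _ := by
              gcongr
              rw [hPSc]
              exact card_frPairsTouching_le hr S

/-- The deletion method: if the expected number of bad `s`-sets in a random `r`-graph is small,
there is a sparse `F_r`-free `r`-graph in which every `s`-set contains an edge. -/
lemma exists_frFree_of_weights {r n s : ℕ} (hr : 2 ≤ r) {q K : ℝ} (hq : 0 ≤ q) (hK : 0 < K)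
    (hedge : 2 * (n.choose r * q) ≤ K)
    (hset : 2 * (n.choose s * Real.exp (q ^ (r + 1) *
      ((r + 1) * s.choose r * n.choose (r - 1) : ℕ))) < (1 + q) ^ (s.choose r)) :
    ∃ E : Finset (Finset (Fin n)), IsRGraph r E ∧ ¬ HasFr r E ∧ (E.card : ℝ) < K ∧
      ∀ S : Finset (Fin n), S.card = s → ∃ e ∈ E, e ⊆ S := by
  classical
  by_contra hcon
  push Not at hcon
  set P := Finset.powersetCard r (Finset.univ : Finset (Fin n)) with hP
  set Y := Finset.powersetCard s (Finset.univ : Finset (Fin n)) with hY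
  have hPc : P.card = n.choose r := by simp [hP]
  have hYc : Y.card = n.choose s := by simp [hY]
  set 𝓑 : Finset (Fin n) → Finset (Finset (Finset (Fin n))) := fun S =>
    {E ∈ P.powerset | ∃ T ⊆ frPairsTouching r S,
      (T : Set (Finset (Fin n) × Finset (Fin n))).PairwiseDisjoint frEdges ∧
        T.biUnion frEdges ⊆ E ∧ ∀ e ∈ E, e ⊆ S → e ∈ T.biUnion frEdges} with h𝓑
  have hcover : P.powerset ⊆ {E ∈ P.powerset | K ≤ (E.card : ℝ)} ∪ Y.biUnion 𝓑 := by
    intro E hE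
    rcases le_or_gt K (E.card : ℝ) with h | h
    · exact Finset.mem_union_left _ (Finset.mem_filter.2 ⟨hE, h⟩)
    refine Finset.mem_union_right _ ?_
    obtain ⟨E', hE'E, hfree, hind⟩ := exists_frFree_subset r E
    have hE'r : IsRGraph r E' := fun e he =>
      (Finset.mem_powersetCard.1 (Finset.mem_powerset.1 hE (hE'E he))).2
    have hcard : (E'.card : ℝ) < K :=
      lt_of_le_of_lt (by exact_mod_cast Finset.card_le_card hE'E) h
    obtain ⟨S, hS, hSE⟩ := hcon E' hE'r hfree hcard
    exact Finset.mem_biUnion.2 ⟨S, by simp [hY, hS], Finset.mem_filter.2 ⟨hE, hind S hSE⟩⟩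
  set Z := (1 + q) ^ n.choose r with hZ
  have hZpos : 0 < Z := by positivity
  have hM : 0 < (1 + q) ^ (s.choose r) := by positivity
  have hlarge : 2 * ∑ E ∈ P.powerset with K ≤ (E.card : ℝ), q ^ E.card ≤ Z := by
    have h1 : K * ∑ E ∈ P.powerset with K ≤ (E.card : ℝ), q ^ E.card ≤
        n.choose r * q * Z := by
      rw [hZ, ← hPc]
      refine le_trans ?_ (sum_card_mul_pow_card_le P hq)
      rw [Finset.mul_sum]
      calc _ ≤ ∑ E ∈ P.powerset with K ≤ (E.card : ℝ), (E.card : ℝ) * q ^ E.card := by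
            refine Finset.sum_le_sum fun E hE => ?_
            have := (Finset.mem_filter.1 hE).2
            gcongr
        _ ≤ _ := Finset.sum_le_sum_of_subset_of_nonneg (Finset.filter_subset _ _)
            fun _ _ _ => by positivity
    have h2 : 2 * (n.choose r * q) * Z ≤ K * Z := by gcongr
    refine le_of_mul_le_mul_left ?_ hK
    linarith
  have hbad : 2 * ∑ E ∈ Y.biUnion 𝓑, q ^ E.card < Z := by
    have h1 : (∑ E ∈ Y.biUnion 𝓑, q ^ E.card) * (1 + q) ^ (s.choose r) ≤
        n.choose s * (Real.exp (q ^ (r + 1) *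
          ((r + 1) * s.choose r * n.choose (r - 1) : ℕ)) * Z) := by
      calc _ ≤ (∑ S ∈ Y, ∑ E ∈ 𝓑 S, q ^ E.card) * (1 + q) ^ (s.choose r) := by
            gcongr
            exact sum_biUnion_le_sum_sum_s2 _ _ fun _ => by positivity
        _ ≤ _ := by
            rw [Finset.sum_mul, ← hYc, ← nsmul_eq_mul]
            refine Finset.sum_le_card_nsmul _ _ _ fun S hS => ?_
            have hSc : S.card = s := (Finset.mem_powersetCard.1 hS).2
            have := sum_pow_card_covered_le hr hq S (𝓑 S) fun E hE =>
              ⟨Finset.mem_powerset.1 (Finset.mem_filter.1 hE).1, (Finset.mem_filter.1 hE).2⟩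
            rwa [hSc, Fintype.card_fin] at this
    have h2 := mul_lt_mul_of_pos_right hset hZpos
    refine lt_of_mul_lt_mul_right ?_ hM.le
    linarith
  have htotal : Z ≤ ∑ E ∈ P.powerset with K ≤ (E.card : ℝ), q ^ E.card +
      ∑ E ∈ Y.biUnion 𝓑, q ^ E.card := by
    rw [hZ, ← hPc, ← sum_pow_card_powerset]
    refine (Finset.sum_le_sum_of_subset_of_nonneg hcover fun _ _ _ => by positivity).trans ?_
    rw [← Finset.sum_union_inter]
    exact le_add_of_nonneg_right (Finset.sum_nonneg fun _ _ => by positivity)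
  linarith

/-- If every `s`-set contains an edge, then `k * s` vertices cannot be properly `k`-colored. -/
lemma not_hypColorable_of_forall_card {r k s : ℕ} (hr : 2 ≤ r) (hk : 0 < k)
    {E : Finset (Finset (Fin (k * s)))} (hE : IsRGraph r E)
    (hS : ∀ S : Finset (Fin (k * s)), S.card = s → ∃ e ∈ E, e ⊆ S) : ¬ HypColorable E k := by
  rintro ⟨f, hf⟩
  have : Nonempty (Fin k) := ⟨⟨0, hk⟩⟩
  obtain ⟨c, hc⟩ := Fintype.exists_le_card_fiber_of_mul_le_card f (n := s) (by simp)
  obtain ⟨S, hSc, hScard⟩ := Finset.exists_subset_card_eq hc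
  obtain ⟨e, he, heS⟩ := hS S hScard
  obtain ⟨u, hu, v, hv, huv⟩ := hf e he (by rw [hE e he]; exact hr)
  have hcol : ∀ w ∈ e, f w = c := fun w hw => (Finset.mem_filter.1 (hSc (heS hw))).2
  exact huv ((hcol u hu).trans (hcol v hv).symm)

/-- The construction uses about `(frConst r * k ^ (r - 1) * (log k) ^ r) ^ (1 / (r - 1) ^ 2)`
vertices per color. -/
noncomputable def frConst (r : ℕ) : ℝ :=
  (2 * (r.factorial : ℝ)) ^ r * (4 * ((r : ℝ) + 1) / ((r - 1).factorial : ℝ))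

lemma choose_le_exp {k s : ℕ} (hk : 0 < k) :
    ((k * s).choose s : ℝ) ≤ Real.exp (s + Real.log k * s) := by
  have hk' : (0 : ℝ) < k := by exact_mod_cast hk
  have h1 : ((k * s).choose s : ℝ) ≤ ((k * s : ℕ) : ℝ) ^ s / s.factorial :=
    Nat.choose_le_pow_div s (k * s)
  have h2 : (s : ℝ) ^ s / s.factorial ≤ Real.exp s :=
    Real.pow_div_factorial_le_exp _ (Nat.cast_nonneg s) s
  have h3 : Real.exp (Real.log k * s) = (k : ℝ) ^ s := by
    rw [mul_comm, Real.exp_nat_mul, Real.exp_log hk']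
  calc ((k * s).choose s : ℝ) ≤ (k : ℝ) ^ s * ((s : ℝ) ^ s / s.factorial) := by
        refine h1.trans_eq ?_
        push_cast
        ring
    _ ≤ _ := by
        rw [Real.exp_add, h3, mul_comm]
        gcongr

lemma pow_le_factorial_mul_choose {r s : ℕ} (hs : 10 * r ^ 2 ≤ s) (hs0 : 0 < s) :
    9 / 10 * (s : ℝ) ^ r ≤ r.factorial * (s.choose r : ℝ) := by
  have hs0' : (0 : ℝ) < s := by exact_mod_cast hs0
  have hs' : 10 * (r : ℝ) ^ 2 ≤ s := by exact_mod_cast hs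
  have hrs : r ≤ s := by nlinarith
  have hrs' : (r : ℝ) ≤ s := by exact_mod_cast hrs
  have h1 : ((s + 1 - r : ℕ) : ℝ) ^ r ≤ r.factorial * (s.choose r : ℝ) := by
    rw [← Nat.cast_pow, ← Nat.cast_mul, Nat.cast_le, ← Nat.descFactorial_eq_factorial_mul_choose]
    exact Nat.pow_sub_le_descFactorial s r
  refine le_trans ?_ h1
  have h2 : (s : ℝ) * (1 + -(r / s)) ≤ ((s + 1 - r : ℕ) : ℝ) := by
    rw [Nat.cast_sub (by omega)]
    push_cast
    field_simp
    linarith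
  have h3 : (r : ℝ) / s ≤ 1 := (div_le_one hs0').2 hrs'
  have h4 : 1 + (r : ℝ) * -(r / s) ≤ (1 + -((r : ℝ) / s)) ^ r :=
    one_add_mul_le_pow (by linarith) r
  have h5 : (r : ℝ) * (r / s) ≤ 1 / 10 := by
    rw [← mul_div_assoc, div_le_iff₀ hs0']
    nlinarith
  calc 9 / 10 * (s : ℝ) ^ r ≤ (1 + -((r : ℝ) / s)) ^ r * (s : ℝ) ^ r := by
        gcongr
        linarith
    _ = ((s : ℝ) * (1 + -(r / s))) ^ r := by rw [mul_pow, mul_comm]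
    _ ≤ _ := by
        have : 0 ≤ (s : ℝ) * (1 + -(r / s)) := mul_nonneg hs0'.le (by linarith)
        gcongr

lemma exp_le_one_add_pow {q : ℝ} (hq : 0 ≤ q) (hq' : q ≤ 1 / 11) (M : ℕ) :
    Real.exp (11 / 12 * (q * M)) ≤ (1 + q) ^ M := by
  have h1 : 11 / 12 * q ≤ Real.log (1 + q) := by
    refine le_trans ?_ (Real.one_sub_inv_le_log_of_pos (by linarith))
    have : (1 + q) * (1 + q)⁻¹ = 1 := mul_inv_cancel₀ (by linarith)
    have h2 : 1 - (1 + q)⁻¹ = q * (1 + q)⁻¹ := by linarith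
    have h3 : 11 / 12 ≤ (1 + q)⁻¹ := by
      rw [le_inv_comm₀ (by norm_num) (by linarith)]
      linarith
    rw [h2, mul_comm]
    gcongr
  calc Real.exp (11 / 12 * (q * M)) = Real.exp (M * (11 / 12 * q)) := by ring_nf
    _ = Real.exp (11 / 12 * q) ^ M := Real.exp_nat_mul _ _
    _ ≤ (1 + q) ^ M := by
        gcongr
        rw [← Real.le_log_iff_exp_le (by linarith)]
        exact h1

/-- The deletion method with edge odds `2 * r! * log k / s ^ (r - 1)` on `k * s` vertices. -/
lemma exists_frFree_of_threshold {r k s : ℕ} (hr : 2 ≤ r) (hL : 10 ≤ Real.log k)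
    (hs : 10 * r ^ 2 ≤ s) (hsL : 22 * (r.factorial : ℝ) * Real.log k ≤ (s : ℝ) ^ (r - 1))
    (hsG : frConst r * (k : ℝ) ^ (r - 1) * Real.log k ^ r ≤ (s : ℝ) ^ ((r - 1) ^ 2))
    {K : ℝ} (hK : 4 * (k : ℝ) ^ r * Real.log k * s ≤ K) :
    ∃ E : Finset (Finset (Fin (k * s))), IsRGraph r E ∧ ¬ HasFr r E ∧ ¬ HypColorable E k ∧
      (E.card : ℝ) < K := by
  have hk : 0 < k := by
    rcases Nat.eq_zero_or_pos k with rfl | h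
    · norm_num at hL
    · exact h
  have hk' : (0 : ℝ) < k := by exact_mod_cast hk
  have hs0 : 0 < s := by nlinarith
  have hs1 : (40 : ℝ) ≤ s := by
    have : 40 ≤ s := by nlinarith
    exact_mod_cast this
  have hs0' : (0 : ℝ) < s := by linarith
  set L := Real.log k with hLdef
  have hL0 : 0 < L := by linarith
  obtain ⟨m, rfl⟩ : ∃ m, r = m + 1 := ⟨r - 1, by omega⟩
  simp only [Nat.add_sub_cancel] at *
  have hf : (0 : ℝ) < (m + 1).factorial := by positivity
  have hf' : (0 : ℝ) < m.factorial := by positivity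
  set q : ℝ := 2 * (m + 1).factorial * L / (s : ℝ) ^ m with hqdef
  have hq : 0 < q := by positivity
  have hqs : q * (s : ℝ) ^ m = 2 * (m + 1).factorial * L := by
    rw [hqdef]
    field_simp
  have hq11 : q ≤ 1 / 11 := by
    rw [hqdef, div_le_iff₀ (by positivity)]
    linarith
  set M := s.choose (m + 1) with hM
  have hqM : 9 / 5 * (L * s) ≤ q * M := by
    have h := mul_le_mul_of_nonneg_left (pow_le_factorial_mul_choose hs hs0) hq.le
    have h2 : q * (9 / 10 * (s : ℝ) ^ (m + 1)) = (m + 1).factorial * (9 / 5 * (L * s)) := by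
      rw [pow_succ]
      linear_combination (9 / 10 * (s : ℝ)) * hqs
    rw [h2] at h
    refine le_of_mul_le_mul_left ?_ hf
    linarith
  have hn (j : ℕ) : ((k * s).choose j : ℝ) * j.factorial ≤ (k : ℝ) ^ j * (s : ℝ) ^ j := by
    have := (le_div_iff₀ (by positivity)).1 (Nat.choose_le_pow_div (α := ℝ) j (k * s))
    rwa [Nat.cast_mul, mul_pow] at this
  have hcopies : q ^ (m + 1) * ((m + 1 + 1) * ((k * s).choose m : ℝ)) ≤ 1 / 4 := by
    have hspos : 0 < (s : ℝ) ^ (m * (m + 1)) := by positivity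
    have h1 : q ^ (m + 1) * (s : ℝ) ^ (m * (m + 1)) =
        (2 * (m + 1).factorial) ^ (m + 1) * L ^ (m + 1) := by
      rw [pow_mul, ← mul_pow, hqs, mul_pow]
    have h2 : frConst (m + 1) * m.factorial =
        4 * ((2 * (m + 1).factorial) ^ (m + 1) * (m + 1 + 1)) := by
      simp only [frConst, Nat.add_sub_cancel]
      push_cast
      field_simp
    refine le_of_mul_le_mul_right ?_ (mul_pos hspos hf')
    calc q ^ (m + 1) * ((m + 1 + 1) * ((k * s).choose m : ℝ)) *
          ((s : ℝ) ^ (m * (m + 1)) * m.factorial)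
        = (q ^ (m + 1) * (s : ℝ) ^ (m * (m + 1))) * (m + 1 + 1) *
          (((k * s).choose m : ℝ) * m.factorial) := by ring
      _ ≤ (q ^ (m + 1) * (s : ℝ) ^ (m * (m + 1))) * (m + 1 + 1) *
          ((k : ℝ) ^ m * (s : ℝ) ^ m) := by
          exact mul_le_mul_of_nonneg_left (hn m) (by positivity)
      _ = 1 / 4 * m.factorial * (s : ℝ) ^ m *
          (frConst (m + 1) * (k : ℝ) ^ m * L ^ (m + 1)) := by
          rw [h1]
          linear_combination (-(1 / 4) * (s : ℝ) ^ m * (k : ℝ) ^ m * L ^ (m + 1)) * h2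
      _ ≤ 1 / 4 * m.factorial * (s : ℝ) ^ m * (s : ℝ) ^ (m ^ 2) := by
          gcongr
      _ = _ := by ring
  have hKpos : 0 < K := lt_of_lt_of_le (by positivity) hK
  obtain ⟨E, hEr, hEfree, hEK, hES⟩ := exists_frFree_of_weights (n := k * s) (s := s) hr hq.le
    hKpos (by
      refine le_trans ?_ hK
      refine le_of_mul_le_mul_right ?_ hf
      have h := mul_le_mul_of_nonneg_left (hn (m + 1)) hq.le
      have h2 : q * ((k : ℝ) ^ (m + 1) * (s : ℝ) ^ (m + 1)) =
          2 * (m + 1).factorial * L * (k : ℝ) ^ (m + 1) * s := by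
        rw [pow_succ (s : ℝ)]
        linear_combination ((k : ℝ) ^ (m + 1) * s) * hqs
      linarith) (by
      have hexp : q ^ (m + 1 + 1) *
          ((m + 1 + 1) * s.choose (m + 1) * (k * s).choose (m + 1 - 1) : ℕ) ≤ 1 / 4 * (q * M) := by
        rw [Nat.add_sub_cancel]
        push_cast
        have h := mul_le_mul_of_nonneg_right hcopies (show 0 ≤ q * (M : ℝ) by positivity)
        refine le_trans (le_of_eq ?_) h
        rw [← hM]
        ring
      refine lt_of_lt_of_le ?_ (exp_le_one_add_pow hq.le hq11 _)
      have h2 : (2 : ℝ) ≤ Real.exp 1 := by linarith [Real.add_one_le_exp (1 : ℝ)]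
      calc _ ≤ Real.exp 1 * (Real.exp (s + L * s) * Real.exp (1 / 4 * (q * M))) := by
            gcongr
            exact choose_le_exp hk
        _ = Real.exp (1 + ((s + L * s) + 1 / 4 * (q * M))) := by
            rw [← Real.exp_add, ← Real.exp_add]
        _ < _ := by
            rw [Real.exp_lt_exp, ← hM]
            nlinarith)
  exact ⟨E, hEr, hEfree, not_hypColorable_of_forall_card hr hk hEr hES, hEK⟩

lemma factorial_add_two_le (j : ℕ) : (j + 2).factorial ≤ 2 * (j + 2) ^ j := by
  induction j with
  | zero => decide
  | succ j ih =>
    have h : (j + 2) ^ j ≤ (j + 3) ^ j := Nat.pow_le_pow_left (by omega) j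
    calc (j + 1 + 2).factorial = (j + 3) * (j + 2).factorial := Nat.factorial_succ _
      _ ≤ (j + 3) * (2 * (j + 3) ^ j) := by gcongr; omega
      _ = _ := by ring

lemma four_mul_add_three_le (j : ℕ) (hj : 1 ≤ j) :
    4 * (j + 3) ≤ 2 ^ (j + 2) * (j + 1).factorial := by
  induction j, hj using Nat.le_induction with
  | base => decide
  | succ j hj ih =>
    rw [show j + 1 + 2 = j + 2 + 1 by ring, pow_succ, Nat.factorial_succ]
    nlinarith

lemma frConst_le_pow {r : ℕ} (hr : 3 ≤ r) : frConst r ≤ ((r : ℝ) ^ r) ^ r := by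
  obtain ⟨j, rfl⟩ : ∃ j, r = j + 2 := ⟨r - 2, by omega⟩
  have h1 : ((j + 2).factorial : ℝ) ≤ 2 * ((j + 2 : ℕ) : ℝ) ^ j := by
    exact_mod_cast factorial_add_two_le j
  have h2 : 4 * (((j + 2 : ℕ) : ℝ) + 1) / ((j + 2 - 1).factorial : ℝ) ≤ 2 ^ (j + 2) := by
    rw [div_le_iff₀ (by positivity)]
    exact_mod_cast four_mul_add_three_le j (by omega)
  have h3 : (3 : ℝ) ≤ (j + 2 : ℕ) := by exact_mod_cast hr
  rw [frConst]
  calc (2 * ((j + 2).factorial : ℝ)) ^ (j + 2) *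
        (4 * (((j + 2 : ℕ) : ℝ) + 1) / ((j + 2 - 1).factorial : ℝ))
      ≤ (2 * (2 * ((j + 2 : ℕ) : ℝ) ^ j)) ^ (j + 2) * 2 ^ (j + 2) := by gcongr
    _ = (8 * ((j + 2 : ℕ) : ℝ) ^ j) ^ (j + 2) := by rw [← mul_pow]; ring
    _ ≤ (((j + 2 : ℕ) : ℝ) ^ 2 * ((j + 2 : ℕ) : ℝ) ^ j) ^ (j + 2) := by
        gcongr
        nlinarith
    _ = _ := by rw [← pow_add, add_comm 2 j]

lemma one_le_frConst {r : ℕ} (hr : 1 ≤ r) : 1 ≤ frConst r := by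
  have h1 : ((r - 1).factorial : ℝ) ≤ r.factorial := by
    exact_mod_cast Nat.factorial_le (Nat.sub_le r 1)
  have h2 : (1 : ℝ) ≤ r.factorial := by exact_mod_cast Nat.factorial_pos r
  have h3 : 2 * (r.factorial : ℝ) ≤ (2 * (r.factorial : ℝ)) ^ r :=
    le_self_pow₀ (by linarith) (by omega)
  rw [frConst, ← mul_div_assoc, one_le_div (by positivity)]
  calc ((r - 1).factorial : ℝ) ≤ 2 * (r.factorial : ℝ) * 1 := by linarith
    _ ≤ _ := by
      gcongr
      have : (0 : ℝ) ≤ r := Nat.cast_nonneg r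
      linarith

lemma frConst_rpow_lt {r : ℕ} (hr : 3 ≤ r) :
    22 / 5 * frConst r ^ (1 / ((r : ℝ) - 1) ^ 2) <
      (((r.factorial : ℝ) *
          ((50 * (r.factorial : ℝ) * ((r : ℝ) + 1) / ((r - 1).factorial : ℝ) ^ 2)
            ^ (1 / (r : ℝ)))) ^ (1 / ((r : ℝ) - 3 / 2)) *
        ((10 * ((r : ℝ) - 1) / ((r : ℝ) - 3 / 2))
          ^ (((r : ℝ) - 1 / 2) / ((r : ℝ) - 3 / 2)))) := by
  have hr3 : (3 : ℝ) ≤ r := by exact_mod_cast hr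
  have hr0 : (0 : ℝ) < r := by linarith
  have hr1 : (0 : ℝ) < (r : ℝ) - 1 := by linarith
  have hr2 : (0 : ℝ) < (r : ℝ) - 3 / 2 := by linarith
  have hG1 := one_le_frConst (r := r) (by omega)
  have hG0 : 0 ≤ frConst r := by linarith
  set W := frConst r ^ (1 / (r : ℝ)) with hW
  set D := (r.factorial : ℝ) *
    ((50 * (r.factorial : ℝ) * ((r : ℝ) + 1) / ((r - 1).factorial : ℝ) ^ 2) ^ (1 / (r : ℝ)))
    with hD
  set C := 10 * ((r : ℝ) - 1) / ((r : ℝ) - 3 / 2) with hC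
  set x := (r : ℝ) / ((r : ℝ) - 1) ^ 2 with hx
  set y := 1 / ((r : ℝ) - 3 / 2) with hy
  have hy0 : 0 < y := by positivity
  have hxy : x - y = ((r : ℝ) - 2) / (2 * ((r : ℝ) - 1) ^ 2 * ((r : ℝ) - 3 / 2)) := by
    rw [hx, hy, div_sub_div _ _ (by positivity) hr2.ne',
      div_eq_div_iff (by positivity) (by positivity)]
    ring
  have hxy0 : 0 ≤ x - y := by
    rw [hxy]
    have : (0 : ℝ) ≤ (r : ℝ) - 2 := by linarith
    positivity
  have hD0 : 0 < D := by positivity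
  have hC10 : 10 < C := by
    rw [hC, lt_div_iff₀ hr2]
    linarith
  have hW1 : 1 ≤ W := Real.one_le_rpow hG1 (by positivity)
  have hWx : frConst r ^ (1 / ((r : ℝ) - 1) ^ 2) = W ^ x := by
    rw [hW, ← Real.rpow_mul hG0, hx]
    congr 1
    field_simp
  have hexp : ((r : ℝ) - 1 / 2) / ((r : ℝ) - 3 / 2) = 1 + y := by
    rw [hy, div_eq_iff hr2.ne', add_mul, one_div_mul_cancel hr2.ne']
    ring
  have hWD : W ≤ C * D := by
    have h1 : W = 2 * (r.factorial : ℝ) *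
        (4 * ((r : ℝ) + 1) / ((r - 1).factorial : ℝ)) ^ (1 / (r : ℝ)) := by
      rw [hW, frConst, Real.mul_rpow (by positivity) (by positivity), one_div,
        Real.pow_rpow_inv_natCast (by positivity) (by omega)]
    have h2 : 4 * ((r : ℝ) + 1) / ((r - 1).factorial : ℝ) ≤
        50 * (r.factorial : ℝ) * ((r : ℝ) + 1) / ((r - 1).factorial : ℝ) ^ 2 := by
      have h3 : ((r - 1).factorial : ℝ) ≤ r.factorial := by
        exact_mod_cast Nat.factorial_le (Nat.sub_le r 1)
      rw [div_le_div_iff₀ (by positivity) (by positivity)]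
      have h4 : (0 : ℝ) < (r - 1).factorial := by positivity
      have h5 : 4 * ((r - 1).factorial : ℝ) ≤ 50 * r.factorial := by linarith
      calc 4 * ((r : ℝ) + 1) * ((r - 1).factorial : ℝ) ^ 2
          = (4 * ((r - 1).factorial : ℝ)) * (((r : ℝ) + 1) * (r - 1).factorial) := by ring
        _ ≤ (50 * r.factorial) * (((r : ℝ) + 1) * (r - 1).factorial) := by gcongr
        _ = _ := by ring
    rw [h1, hD, ← mul_assoc]
    gcongr
    linarith
  have hWr : W ≤ (r : ℝ) ^ r := by
    rw [hW, one_div]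
    calc frConst r ^ (r : ℝ)⁻¹ ≤ (((r : ℝ) ^ r) ^ r) ^ (r : ℝ)⁻¹ := by
          gcongr
          exact frConst_le_pow hr
      _ = _ := Real.pow_rpow_inv_natCast (by positivity) (by omega)
  have hWxy : W ^ (x - y) ≤ 2 := by
    have hlog : Real.log W ≤ r * ((r : ℝ) - 1) := by
      calc Real.log W ≤ Real.log ((r : ℝ) ^ r) := Real.log_le_log (by linarith) hWr
        _ = r * Real.log r := Real.log_pow _ _
        _ ≤ _ := by
          gcongr
          exact Real.log_le_sub_one_of_pos hr0
    have hle : Real.log W * (x - y) ≤ 2 / 3 := by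
      calc Real.log W * (x - y) ≤ r * ((r : ℝ) - 1) * (x - y) := by gcongr
        _ ≤ 2 / 3 := by
          rw [hxy, ← mul_div_assoc, div_le_iff₀ (by positivity)]
          have : (r : ℝ) * (r - 2) ≤ 2 / 3 * (2 * (r - 1) * (r - 3 / 2)) := by nlinarith
          calc (r : ℝ) * (r - 1) * (r - 2) = (r - 1) * (r * (r - 2)) := by ring
            _ ≤ (r - 1) * (2 / 3 * (2 * (r - 1) * (r - 3 / 2))) := by gcongr
            _ = _ := by ring
    rw [Real.rpow_def_of_pos (by linarith), ← Real.le_log_iff_exp_le (by norm_num)]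
    linarith [Real.log_two_gt_d9]
  rw [hWx, hexp, Real.rpow_add (by linarith), Real.rpow_one]
  calc 22 / 5 * W ^ x = 22 / 5 * (W ^ (x - y) * W ^ y) := by
        rw [← Real.rpow_add (by linarith), sub_add_cancel]
    _ ≤ 22 / 5 * (2 * (C * D) ^ y) := by gcongr
    _ < 10 * (C * D) ^ y := by
        have : 0 < (C * D) ^ y := by positivity
        linarith
    _ ≤ C * (C * D) ^ y := by gcongr
    _ = _ := by
        rw [Real.mul_rpow (by linarith) hD0.le]
        ring

/-- **Theorem (upper bound for independent neighborhoods).** Fix `r ≥ 3`. For all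
sufficiently large `k` there is an `r`-graph with independent neighborhoods, chromatic
number greater than `k`, and fewer than `c_𝓘 k^(r+1/(r-1)) (log k)^(1 + r/(r-1)²)` edges,
where `c_𝓘 = (r! (50 r! (r+1)/((r-1)!)²)^(1/r))^(1/(r-3/2)) · (10(r-1)/(r-3/2))^((r-1/2)/(r-3/2))`. -/
theorem indep_neighborhoods_upper_bound (r : ℕ) (hr : 3 ≤ r) :
    ∃ k₀ : ℕ, ∀ k : ℕ, k₀ ≤ k →
      ∃ (n : ℕ) (E : Finset (Finset (Fin n))),
        IsRGraph r E ∧ ¬ HasFr r E ∧ ¬ HypColorable E k ∧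
        (E.card : ℝ) <
          (((r.factorial : ℝ) *
              ((50 * (r.factorial : ℝ) * ((r : ℝ) + 1) / ((r - 1).factorial : ℝ) ^ 2)
                ^ (1 / (r : ℝ)))) ^ (1 / ((r : ℝ) - 3 / 2)) *
            ((10 * ((r : ℝ) - 1) / ((r : ℝ) - 3 / 2))
              ^ (((r : ℝ) - 1 / 2) / ((r : ℝ) - 3 / 2)))) *
          ((k : ℝ) ^ ((r : ℝ) + 1 / ((r : ℝ) - 1)) *
            (Real.log k) ^ ((1 : ℝ) + (r : ℝ) / ((r : ℝ) - 1) ^ 2)) := by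
  have hr3 : (3 : ℝ) ≤ r := by exact_mod_cast hr
  have hr0 : (0 : ℝ) < (r : ℝ) - 1 := by linarith
  have hr1 : ((r - 1 : ℕ) : ℝ) = (r : ℝ) - 1 := by
    rw [Nat.cast_sub (by omega), Nat.cast_one]
  have hc := frConst_rpow_lt hr
  set c := (((r.factorial : ℝ) *
      ((50 * (r.factorial : ℝ) * ((r : ℝ) + 1) / ((r - 1).factorial : ℝ) ^ 2)
        ^ (1 / (r : ℝ)))) ^ (1 / ((r : ℝ) - 3 / 2)) *
    ((10 * ((r : ℝ) - 1) / ((r : ℝ) - 3 / 2))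
      ^ (((r : ℝ) - 1 / 2) / ((r : ℝ) - 3 / 2))))
  have hG1 := one_le_frConst (r := r) (by omega)
  have hcast : Filter.Tendsto (fun k : ℕ => (k : ℝ)) Filter.atTop Filter.atTop :=
    tendsto_natCast_atTop_atTop
  have hev1 : ∀ᶠ k : ℕ in Filter.atTop, 10 ≤ Real.log k :=
    (Real.tendsto_log_atTop.comp hcast).eventually_ge_atTop 10
  have hev2 : ∀ᶠ k : ℕ in Filter.atTop, (10 * (r : ℝ) ^ 2) ^ (r - 1) ≤ (k : ℝ) :=
    hcast.eventually_ge_atTop _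
  have hev3 : ∀ᶠ k : ℕ in Filter.atTop, 22 * (r.factorial : ℝ) * Real.log k ≤ (k : ℝ) := by
    have hpos : (0 : ℝ) < 22 * r.factorial := by positivity
    filter_upwards [hcast.eventually (Real.isLittleO_log_id_atTop.def (inv_pos.2 hpos)),
      hev1] with k hk hL
    rw [Real.norm_of_nonneg (by linarith), id, Real.norm_of_nonneg (Nat.cast_nonneg k)] at hk
    rwa [le_inv_mul_iff₀ hpos] at hk
  obtain ⟨k₀, hk₀⟩ := Filter.eventually_atTop.1 (hev1.and (hev2.and hev3))
  refine ⟨k₀, fun k hk => ?_⟩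
  obtain ⟨hL, hk2, hk3⟩ := hk₀ k hk
  set L := Real.log k with hLdef
  have hL0 : 0 < L := by linarith
  have hkpos : (0 : ℝ) < k := lt_of_lt_of_le (by positivity) hk2
  set t : ℝ := frConst r ^ (1 / ((r : ℝ) - 1) ^ 2) * (k : ℝ) ^ (1 / ((r : ℝ) - 1)) *
    L ^ ((r : ℝ) / ((r : ℝ) - 1) ^ 2) with ht
  have htk : (k : ℝ) ^ (1 / ((r : ℝ) - 1)) ≤ t := by
    have h1 : 1 ≤ frConst r ^ (1 / ((r : ℝ) - 1) ^ 2) := Real.one_le_rpow hG1 (by positivity)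
    have h2 : 1 ≤ L ^ ((r : ℝ) / ((r : ℝ) - 1) ^ 2) :=
      Real.one_le_rpow (by linarith) (by positivity)
    have h3 : 0 ≤ (k : ℝ) ^ (1 / ((r : ℝ) - 1)) := by positivity
    calc (k : ℝ) ^ (1 / ((r : ℝ) - 1)) ≤
          frConst r ^ (1 / ((r : ℝ) - 1) ^ 2) * (k : ℝ) ^ (1 / ((r : ℝ) - 1)) :=
          le_mul_of_one_le_left h3 h1
      _ ≤ t := le_mul_of_one_le_right (by positivity) h2
  have hkroot : ((k : ℝ) ^ (1 / ((r : ℝ) - 1))) ^ (r - 1) = k := by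
    rw [← hr1, one_div]
    exact Real.rpow_inv_natCast_pow hkpos.le (by omega)
  have htr : 10 * (r : ℝ) ^ 2 ≤ t := by
    refine le_trans (le_of_pow_le_pow_left₀ (n := r - 1) (by omega) (by positivity) ?_) htk
    rwa [hkroot]
  have htpow : t ^ ((r - 1) ^ 2) = frConst r * (k : ℝ) ^ (r - 1) * L ^ r := by
    rw [ht, mul_pow, mul_pow]
    congr 1
    · congr 1
      · rw [← Real.rpow_mul_natCast (by linarith)]
        push_cast
        rw [hr1, one_div_mul_cancel (by positivity), Real.rpow_one]
      · rw [pow_two, pow_mul, hkroot]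
    · rw [← Real.rpow_mul_natCast hL0.le]
      push_cast
      rw [hr1, div_mul_cancel₀ _ (by positivity), Real.rpow_natCast]
  set s := ⌈t⌉₊ with hs
  have hts : t ≤ s := Nat.le_ceil t
  have ht0 : 0 ≤ t := le_trans (by positivity) htr
  have hst : (s : ℝ) ≤ 11 / 10 * t := by
    have := (Nat.ceil_lt_add_one ht0).le
    nlinarith
  have hkey : 4 * (k : ℝ) ^ r * L * s ≤
      c * ((k : ℝ) ^ ((r : ℝ) + 1 / ((r : ℝ) - 1)) *
        L ^ ((1 : ℝ) + (r : ℝ) / ((r : ℝ) - 1) ^ 2)) := by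
    rw [Real.rpow_add hkpos, Real.rpow_add hL0, Real.rpow_one, Real.rpow_natCast]
    calc 4 * (k : ℝ) ^ r * L * s ≤ 4 * (k : ℝ) ^ r * L * (11 / 10 * t) := by gcongr
      _ = 22 / 5 * frConst r ^ (1 / ((r : ℝ) - 1) ^ 2) *
          ((k : ℝ) ^ r * (k : ℝ) ^ (1 / ((r : ℝ) - 1)) *
            (L * L ^ ((r : ℝ) / ((r : ℝ) - 1) ^ 2))) := by
          rw [ht]
          ring
      _ ≤ _ := by gcongr
  obtain ⟨E, hE⟩ := exists_frFree_of_threshold (r := r) (k := k) (s := s) (by omega) hL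
    (by exact_mod_cast htr.trans hts)
    (hk3.trans (by
      rw [← hkroot]
      gcongr
      exact htk.trans hts))
    (by
      rw [← htpow]
      gcongr) hkey
  exact ⟨k * s, E, hE⟩
end

section
/- Fix r ≥ 3. For all sufficiently large n there exists an r-graph G on n vertices such that: G contains no copy of K_{r+1}^r, G has fewer than n^r/(r−1)^{r−1} edges, and the chromatic number of G is at least n/(4r log n) (in particular, every set of more than 4r log n vertices of G contains an edge). -/
/-- The `r`-graph `E` contains a copy of the complete `r`-graph `K_t^r`:
some `t` vertices have all their `r`-element subsets as edges. -/
def HasCompleteR (r t : ℕ) {V : Type*} (E : Finset (Finset V)) : Prop :=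
  ∃ S : Finset V, S.card = t ∧ ∀ e ⊆ S, e.card = r → e ∈ E

/-- The `(q + 1)`-graph attached to a colouring `c` of ordered pairs: a set is an edge when,
`v` being its least vertex, `c v` maps its other vertices bijectively onto the `q` colours. -/
def rainbowStars {V : Type*} [Fintype V] [LinearOrder V] {q : ℕ} (c : V → V → Fin q) :
    Finset (Finset V) :=
  Finset.univ.biUnion fun v =>
    (Fintype.piFinset fun i => Finset.univ.filter fun u => v < u ∧ c v u = i).image
      fun g => insert v (Finset.univ.image g)

lemma prod_le_sum_div_card_pow {q : ℕ} (hq : 0 < q) (d : Fin q → ℝ) (hd : ∀ i, 0 ≤ d i) :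
    ∏ i, d i ≤ ((∑ i, d i) / q) ^ q := by
  have hprod : 0 ≤ ∏ i, d i := Finset.prod_nonneg fun i _ => hd i
  have h := Real.geom_mean_le_arith_mean Finset.univ (fun _ => 1) d (fun _ _ => zero_le_one)
    (by simpa using hq) fun i _ => hd i
  simp only [Real.rpow_one, Finset.sum_const, Finset.card_fin, nsmul_eq_mul, mul_one,
    one_mul] at h
  calc ∏ i, d i = ((∏ i, d i) ^ ((q : ℝ)⁻¹)) ^ q := (Real.rpow_inv_natCast_pow hprod hq.ne').symm
    _ ≤ _ := pow_le_pow_left₀ (Real.rpow_nonneg hprod _) h q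

lemma sum_card_filter_lt {V : Type*} [LinearOrder V] (S : Finset V) :
    ∑ v ∈ S, ((S.filter (v < ·)).card : ℝ) = S.card * (S.card - 1) / 2 := by
  induction S using Finset.induction_on_min with
  | empty => simp
  | insert a S ha ih =>
    have haS : a ∉ S := fun h => (ha a h).false
    have h1 : (insert a S).filter (a < ·) = S := by
      rw [Finset.filter_insert, if_neg (lt_irrefl a), Finset.filter_true_of_mem ha]
    have h2 : ∀ v ∈ S, (insert a S).filter (v < ·) = S.filter (v < ·) := fun v hv => by
      rw [Finset.filter_insert, if_neg (ha v hv).not_gt]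
    rw [Finset.sum_insert haS, h1, Finset.sum_congr rfl fun v hv => by rw [h2 v hv], ih,
      Finset.card_insert_of_notMem haS]
    push_cast
    ring

section

variable {V : Type*} [Fintype V] [LinearOrder V] {q : ℕ}

lemma mem_rainbowStars {c : V → V → Fin q} {e : Finset V} :
    e ∈ rainbowStars c ↔ ∃ v, ∃ g : Fin q → V, (∀ i, v < g i ∧ c v (g i) = i) ∧
      insert v (Finset.univ.image g) = e := by
  simp [rainbowStars, Fintype.mem_piFinset]

lemma isRGraph_rainbowStars (c : V → V → Fin q) : IsRGraph (q + 1) (rainbowStars c) := by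
  intro e he
  obtain ⟨v, g, hg, rfl⟩ := mem_rainbowStars.1 he
  rw [Finset.card_insert_of_notMem, Finset.card_image_of_injective, Finset.card_fin]
  · intro i j hij
    rw [← (hg i).2, ← (hg j).2, hij]
  · simp only [Finset.mem_image, Finset.mem_univ, true_and, not_exists]
    exact fun i hi => (hg i).1.ne' hi

lemma not_hasCompleteR_rainbowStars (hq : 2 ≤ q) (c : V → V → Fin q) :
    ¬ HasCompleteR (q + 1) (q + 2) (rainbowStars c) := by
  rintro ⟨S, hS, h⟩
  have hne : S.Nonempty := Finset.card_pos.1 (by omega)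
  obtain ⟨v, hv⟩ : ∃ v, v = S.min' hne := ⟨_, rfl⟩
  have hvS : v ∈ S := hv ▸ S.min'_mem hne
  obtain ⟨x, hx, y, hy, hxy, hc⟩ :=
    Finset.exists_ne_map_eq_of_card_lt_of_maps_to (s := S.erase v) (t := Finset.univ) (f := c v)
      (by rw [Finset.card_erase_of_mem hvS, hS, Finset.card_fin]; omega) (by simp)
  obtain ⟨hxv, hxS⟩ := Finset.mem_erase.1 hx
  obtain ⟨hyv, hyS⟩ := Finset.mem_erase.1 hy
  obtain ⟨e, hle, heS, hcard⟩ := Finset.exists_subsuperset_card_eq (s := {v, x, y}) (t := S)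
    (n := q + 1)
    (by simp only [Finset.insert_subset_iff, Finset.singleton_subset_iff, hvS, hxS, hyS, and_self])
    (Finset.card_le_three.trans (by omega)) (by omega)
  simp only [Finset.insert_subset_iff, Finset.singleton_subset_iff] at hle
  obtain ⟨hve, hxe, hye⟩ := hle
  obtain ⟨w, g, hg, rfl⟩ := mem_rainbowStars.1 (h e heS hcard)
  have hwv : w = v := by
    have hvw : v ≤ w := hv ▸ S.min'_le w (heS (Finset.mem_insert_self _ _))
    simp only [Finset.mem_insert, Finset.mem_image, Finset.mem_univ, true_and] at hve
    rcases hve with h1 | ⟨i, hi⟩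
    · exact h1.symm
    · exact absurd (hg i).1 (by rw [hi]; exact hvw.not_gt)
  subst hwv
  simp only [Finset.mem_insert, Finset.mem_image, Finset.mem_univ, true_and] at hxe hye
  obtain ⟨i, rfl⟩ := hxe.resolve_left hxv
  obtain ⟨j, rfl⟩ := hye.resolve_left hyv
  rw [(hg i).2, (hg j).2] at hc
  exact hxy (by rw [hc])

lemma card_rainbowStars_lt [Nonempty V] (hq : 0 < q) (c : V → V → Fin q) :
    ((rainbowStars c).card : ℝ) < (Fintype.card V : ℝ) ^ (q + 1) / (q : ℝ) ^ q := by
  have hq0 : (0 : ℝ) < q := by positivity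
  have hrow (v : V) : (∏ i : Fin q,
      ((Finset.univ.filter fun u => v < u ∧ c v u = i).card : ℝ)) <
      (Fintype.card V : ℝ) ^ q / (q : ℝ) ^ q := by
    refine (prod_le_sum_div_card_pow hq _ fun i => by positivity).trans_lt ?_
    rw [← div_pow]
    refine pow_lt_pow_left₀ ?_ (by positivity) hq.ne'
    refine div_lt_div_of_pos_right ?_ hq0
    have hsum : ∑ i : Fin q, (Finset.univ.filter fun u => v < u ∧ c v u = i).card =
        (Finset.univ.filter fun u => v < u).card := by
      rw [Finset.card_eq_sum_card_fiberwise (f := c v) (t := Finset.univ) (by simp)]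
      simp [Finset.filter_filter]
    rw [← Nat.cast_sum, hsum]
    exact_mod_cast Finset.card_lt_univ_of_notMem (x := v) (by simp)
  have hcard : (rainbowStars c).card ≤ ∑ v : V, ∏ i : Fin q,
      (Finset.univ.filter fun u => v < u ∧ c v u = i).card := by
    refine Finset.card_biUnion_le.trans (Finset.sum_le_sum fun v _ => ?_)
    exact Finset.card_image_le.trans (Fintype.card_piFinset _).le
  calc ((rainbowStars c).card : ℝ)
      ≤ ∑ v : V, ∏ i : Fin q, ((Finset.univ.filter fun u => v < u ∧ c v u = i).card : ℝ) := by
        exact_mod_cast hcard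
    _ < ∑ _v : V, (Fintype.card V : ℝ) ^ q / (q : ℝ) ^ q :=
        Finset.sum_lt_sum_of_nonempty Finset.univ_nonempty fun v _ => hrow v
    _ = _ := by
        rw [Finset.sum_const, Finset.card_univ, nsmul_eq_mul]
        ring

lemma exists_missing_color {c : V → V → Fin q} {S : Finset V}
    (hS : ∀ e ∈ rainbowStars c, ¬ e ⊆ S) {v : V} (hv : v ∈ S) :
    ∃ i, ∀ u ∈ S.filter (v < ·), c v u ≠ i := by
  by_contra! h
  choose g hg hc using h
  simp only [Finset.mem_filter] at hg
  refine hS _ (mem_rainbowStars.2 ⟨v, g, fun i => ⟨(hg i).2, hc i⟩, rfl⟩) ?_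
  simp only [Finset.insert_subset_iff, hv, Finset.image_subset_iff, true_and]
  exact fun i _ => (hg i).1

lemma card_filter_exists_missing_color_le (hq : 0 < q) (T : Finset V) :
    ((Finset.univ.filter fun g : V → Fin q => ∃ i, ∀ u ∈ T, g u ≠ i).card : ℝ) ≤
      (q : ℝ) ^ Fintype.card V * (q * Real.exp (-(T.card : ℝ) / q)) := by
  have hq0 : (0 : ℝ) < q := by positivity
  have hone (i : Fin q) : ((Finset.univ.filter fun g : V → Fin q => ∀ u ∈ T, g u ≠ i).card : ℝ) ≤
      (q : ℝ) ^ Fintype.card V * Real.exp (-(T.card : ℝ) / q) := by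
    have heq : (Finset.univ.filter fun g : V → Fin q => ∀ u ∈ T, g u ≠ i) =
        Fintype.piFinset fun u => if u ∈ T then Finset.univ.erase i else Finset.univ := by
      ext g
      simp only [Finset.mem_filter, Finset.mem_univ, true_and, Fintype.mem_piFinset]
      refine forall_congr' fun u => ?_
      split_ifs with hu <;> simp [hu]
    have hfac (u : V) : (((if u ∈ T then Finset.univ.erase i else Finset.univ :
        Finset (Fin q)).card : ℕ) : ℝ) ≤ q * (if u ∈ T then Real.exp (-1 / q) else 1) := by
      split_ifs
      · rw [Finset.card_erase_of_mem (Finset.mem_univ i), Finset.card_fin, Nat.cast_pred hq]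
        have := mul_le_mul_of_nonneg_left (Real.add_one_le_exp (-1 / (q : ℝ))) hq0.le
        refine le_trans (le_of_eq ?_) this
        field_simp
        ring
      · simp
    rw [heq, Fintype.card_piFinset, Nat.cast_prod]
    refine (Finset.prod_le_prod (fun _ _ => by positivity) fun u _ => hfac u).trans_eq ?_
    rw [Finset.prod_mul_distrib, Finset.prod_const, Finset.card_univ, Finset.prod_ite_mem,
      Finset.univ_inter, Finset.prod_const, ← Real.exp_nat_mul]
    ring_nf
  have hsub : (Finset.univ.filter fun g : V → Fin q => ∃ i, ∀ u ∈ T, g u ≠ i) ⊆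
      Finset.univ.biUnion fun i =>
        Finset.univ.filter fun g : V → Fin q => ∀ u ∈ T, g u ≠ i := by
    intro g
    simp
  calc ((Finset.univ.filter fun g : V → Fin q => ∃ i, ∀ u ∈ T, g u ≠ i).card : ℝ)
      ≤ ∑ i : Fin q,
          ((Finset.univ.filter fun g : V → Fin q => ∀ u ∈ T, g u ≠ i).card : ℝ) := by
        exact_mod_cast (Finset.card_le_card hsub).trans Finset.card_biUnion_le
    _ ≤ ∑ _i : Fin q, (q : ℝ) ^ Fintype.card V * Real.exp (-(T.card : ℝ) / q) :=
        Finset.sum_le_sum fun i _ => hone i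
    _ = _ := by
        rw [Finset.sum_const, Finset.card_fin, nsmul_eq_mul]
        ring

lemma card_filter_independent_le (hq : 0 < q) (S : Finset V) :
    ((Finset.univ.filter fun c : V → V → Fin q => ∀ e ∈ rainbowStars c, ¬ e ⊆ S).card : ℝ) ≤
      Fintype.card (V → V → Fin q) *
        (q * Real.exp (-((S.card : ℝ) - 1) / (2 * q))) ^ S.card := by
  have hsub : (Finset.univ.filter fun c : V → V → Fin q => ∀ e ∈ rainbowStars c, ¬ e ⊆ S) ⊆
      Fintype.piFinset fun v => if v ∈ S then
        Finset.univ.filter fun g : V → Fin q => ∃ i, ∀ u ∈ S.filter (v < ·), g u ≠ i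
        else Finset.univ := by
    intro c hc
    simp only [Finset.mem_filter, Finset.mem_univ, true_and] at hc
    refine Fintype.mem_piFinset.2 fun v => ?_
    split_ifs with hv
    · simpa only [Finset.mem_filter, Finset.mem_univ, true_and] using exists_missing_color hc hv
    · exact Finset.mem_univ _
  have hfac (v : V) : (((if v ∈ S then
        Finset.univ.filter fun g : V → Fin q => ∃ i, ∀ u ∈ S.filter (v < ·), g u ≠ i
        else Finset.univ : Finset (V → Fin q)).card : ℕ) : ℝ) ≤
      (q : ℝ) ^ Fintype.card V *
        (if v ∈ S then q * Real.exp (-((S.filter (v < ·)).card : ℝ) / q) else 1) := by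
    split_ifs
    · exact card_filter_exists_missing_color_le hq _
    · simp
  calc ((Finset.univ.filter fun c : V → V → Fin q => ∀ e ∈ rainbowStars c, ¬ e ⊆ S).card : ℝ)
      ≤ ∏ v, (q : ℝ) ^ Fintype.card V *
          (if v ∈ S then q * Real.exp (-((S.filter (v < ·)).card : ℝ) / q) else 1) := by
        refine (Nat.cast_le.2 (Finset.card_le_card hsub)).trans ?_
        rw [Fintype.card_piFinset, Nat.cast_prod]
        exact Finset.prod_le_prod (fun _ _ => by positivity) fun v _ => hfac v
    _ = _ := by
        rw [Finset.prod_mul_distrib, Finset.prod_ite_mem, Finset.univ_inter,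
          Finset.prod_mul_distrib, ← Real.exp_sum, ← Finset.sum_div, Finset.sum_neg_distrib,
          sum_card_filter_lt, mul_pow, ← Real.exp_nat_mul]
        simp only [Finset.prod_const, Finset.card_univ, Fintype.card_fun, Fintype.card_fin,
          Nat.cast_pow]
        congr 3
        field_simp

/-- If `s` is large enough, some colouring makes every `s`-set contain an edge. -/
lemma exists_forall_card_eq_exists_mem_rainbowStars (hq : 0 < q) {s : ℕ} (hs : 0 < s)
    (h : (Fintype.card V : ℝ) * (q * Real.exp (-((s : ℝ) - 1) / (2 * q))) < 1) :
    ∃ c : V → V → Fin q, ∀ S : Finset V, S.card = s → ∃ e ∈ rainbowStars c, e ⊆ S := by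
  by_contra! hcon
  have : Nonempty (Fin q) := ⟨⟨0, hq⟩⟩
  have hpos : (0 : ℝ) < Fintype.card (V → V → Fin q) := by exact_mod_cast Fintype.card_pos
  have hcover : (Finset.univ : Finset (V → V → Fin q)) ⊆
      (Finset.univ.powersetCard s).biUnion fun S =>
        Finset.univ.filter fun c : V → V → Fin q => ∀ e ∈ rainbowStars c, ¬ e ⊆ S := by
    intro c _
    obtain ⟨S, hS, hc⟩ := hcon c
    exact Finset.mem_biUnion.2 ⟨S, by simpa using hS, by simpa using hc⟩
  have hle : (Fintype.card (V → V → Fin q) : ℝ) ≤ Fintype.card (V → V → Fin q) *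
      ((Fintype.card V : ℝ) * (q * Real.exp (-((s : ℝ) - 1) / (2 * q)))) ^ s := by
    calc (Fintype.card (V → V → Fin q) : ℝ)
        ≤ ∑ S ∈ (Finset.univ : Finset V).powersetCard s, ((Finset.univ.filter
            fun c : V → V → Fin q => ∀ e ∈ rainbowStars c, ¬ e ⊆ S).card : ℝ) := by
          exact_mod_cast (Finset.card_le_card hcover).trans Finset.card_biUnion_le
      _ ≤ ∑ _S ∈ (Finset.univ : Finset V).powersetCard s, (Fintype.card (V → V → Fin q) : ℝ) *
            (q * Real.exp (-((s : ℝ) - 1) / (2 * q))) ^ s := by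
          refine Finset.sum_le_sum fun S hS => ?_
          have := card_filter_independent_le hq S
          rwa [(Finset.mem_powersetCard.1 hS).2] at this
      _ = ((Fintype.card V).choose s : ℝ) * ((Fintype.card (V → V → Fin q) : ℝ) *
            (q * Real.exp (-((s : ℝ) - 1) / (2 * q))) ^ s) := by
          rw [Finset.sum_const, Finset.card_powersetCard, Finset.card_univ, nsmul_eq_mul]
      _ ≤ (Fintype.card V : ℝ) ^ s * ((Fintype.card (V → V → Fin q) : ℝ) *
            (q * Real.exp (-((s : ℝ) - 1) / (2 * q))) ^ s) := by
          refine mul_le_mul_of_nonneg_right ?_ (by positivity)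
          exact_mod_cast Nat.choose_le_pow _ _
      _ = _ := by
          rw [mul_pow]
          ring
  have hlt := pow_lt_one₀ (by positivity) h hs.ne'
  nlinarith

end

lemma HypColorable.card_le_mul {V : Type*} [Fintype V] {E : Finset (Finset V)} {k : ℕ} {a : ℝ}
    (hE : ∀ e ∈ E, 2 ≤ e.card) (ha : ∀ S : Finset V, a < S.card → ∃ e ∈ E, e ⊆ S)
    (hk : HypColorable E k) : (Fintype.card V : ℝ) ≤ k * a := by
  classical
  obtain ⟨f, hf⟩ := hk
  have hclass (i : Fin k) : ((Finset.univ.filter fun v => f v = i).card : ℝ) ≤ a := by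
    by_contra! h
    obtain ⟨e, he, heS⟩ := ha _ h
    obtain ⟨u, hu, v, hv, huv⟩ := hf e he (hE e he)
    exact huv ((Finset.mem_filter.1 (heS hu)).2.trans (Finset.mem_filter.1 (heS hv)).2.symm)
  have hsum := Finset.card_eq_sum_card_fiberwise (f := f) (s := Finset.univ) (t := Finset.univ)
    (by simp)
  rw [← Finset.card_univ, hsum, Nat.cast_sum]
  exact (Finset.sum_le_sum fun i _ => hclass i).trans (by simp)

/-- **Theorem.** Fix `r ≥ 3`. For all sufficiently large `n` there is an `r`-graph on `n`
vertices containing no copy of `K_{r+1}^r`, with fewer than `n^r/(r-1)^(r-1)` edges, whose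
chromatic number is at least `n/(4r log n)`; in particular every set of more than
`4r log n` vertices contains an edge. -/
theorem clique_free_construction (r : ℕ) (hr : 3 ≤ r) :
    ∃ n₀ : ℕ, ∀ n : ℕ, n₀ ≤ n →
      ∃ E : Finset (Finset (Fin n)),
        IsRGraph r E ∧ ¬ HasCompleteR r (r + 1) E ∧
        (E.card : ℝ) < (n : ℝ) ^ r / ((r : ℝ) - 1) ^ (r - 1) ∧
        (∀ k : ℕ, HypColorable E k → (n : ℝ) / (4 * (r : ℝ) * Real.log n) ≤ (k : ℝ)) ∧
        (∀ S : Finset (Fin n), 4 * (r : ℝ) * Real.log n < (S.card : ℝ) →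
          ∃ e ∈ E, e ⊆ S) := by
  refine ⟨r, fun n hn => ?_⟩
  obtain ⟨q, rfl⟩ : ∃ q, r = q + 1 := ⟨r - 1, by omega⟩
  have hq : 0 < q := by omega
  have hq0 : (0 : ℝ) < q := by positivity
  have hqn : (q : ℝ) ≤ n := by exact_mod_cast (Nat.le_succ q).trans hn
  have hn0 : (0 : ℝ) < n := hq0.trans_le hqn
  have : Nonempty (Fin n) := ⟨⟨0, by omega⟩⟩
  have hlog : 1 < Real.log n := by
    rw [Real.lt_log_iff_exp_lt hn0]
    have : (3 : ℝ) ≤ n := by exact_mod_cast hr.trans hn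
    linarith [Real.exp_one_lt_d9]
  set a : ℝ := 4 * ((q + 1 : ℕ) : ℝ) * Real.log n with ha
  have ha0 : 0 < a := by positivity
  have hsmall : (Fintype.card (Fin n) : ℝ) *
      (q * Real.exp (-(((⌊a⌋₊ + 1 : ℕ) : ℝ) - 1) / (2 * q))) < 1 := by
    have hfloor : a < ⌊a⌋₊ + 1 := Nat.lt_floor_add_one a
    have hlogq : Real.log q ≤ Real.log n := Real.log_le_log hq0 hqn
    rw [Fintype.card_fin]
    nth_rewrite 1 [← Real.exp_log hn0]
    nth_rewrite 1 [← Real.exp_log hq0]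
    rw [← Real.exp_add, ← Real.exp_add, Real.exp_lt_one_iff]
    have : 2 * Real.log n < (⌊a⌋₊ : ℝ) / (2 * q) := by
      rw [lt_div_iff₀ (by positivity)]
      push_cast at ha
      linarith
    push_cast
    rw [add_sub_cancel_right, neg_div]
    linarith
  obtain ⟨c, hc⟩ :=
    exists_forall_card_eq_exists_mem_rainbowStars (V := Fin n) hq (Nat.succ_pos ⌊a⌋₊) hsmall
  have hlarge : ∀ S : Finset (Fin n), a < S.card → ∃ e ∈ rainbowStars c, e ⊆ S := by
    intro S hS
    obtain ⟨T, hTS, hT⟩ := Finset.exists_subset_card_eq ((Nat.floor_lt ha0.le).2 hS)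
    obtain ⟨e, he, heT⟩ := hc T hT
    exact ⟨e, he, heT.trans hTS⟩
  have hunif := isRGraph_rainbowStars c
  refine ⟨rainbowStars c, hunif, not_hasCompleteR_rainbowStars (by omega) c, ?_,
    fun k hk => ?_, hlarge⟩
  · simpa using card_rainbowStars_lt hq c
  · rw [div_le_iff₀ ha0]
    simpa using hk.card_le_mul (fun e he => by rw [hunif e he]; omega) hlarge
end
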